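/- arXiv:1808.03615 — 2 statements merged into one kernel-verified Lean document; each statement's English description precedes it below -/
import Mathlib

section
/- If V_* is a Steiner triple system, then there is an integer N such that for every integer u with u ≥ N and u ≡ 1 or 3 (mod 6), there are at least ⌊u / (2^{145}·|V_*|^{25})⌋! pairwise nonisomorphic Steiner triple systems U on u points, each having a subsystem isomorphic to V_* that is invariant under Aut U, on which Aut U induces the full automorphism group and with Aut U ≅ Aut V_*. -/
open Finset

noncomputable section
open scoped Classical

/-- `T` is the set of triples of a Steiner triple system on the finite type `α`:
every pair of distinct points lies in exactly one triple. -/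
def IsSTS {α : Type*} (T : Finset (Finset α)) : Prop :=
  (∀ t ∈ T, t.card = 3) ∧
    ∀ p q : α, p ≠ q → ∃! t : Finset α, t ∈ T ∧ p ∈ t ∧ q ∈ t

/-- `T` is the set of triples of a partial Steiner triple system on `α`:
every pair of distinct points lies in at most one triple. -/
def IsPSTS {α : Type*} (T : Finset (Finset α)) : Prop :=
  (∀ t ∈ T, t.card = 3) ∧
    ∀ p q : α, p ≠ q → ∀ t₁ ∈ T, ∀ t₂ ∈ T, p ∈ t₁ → q ∈ t₁ → p ∈ t₂ → q ∈ t₂ → t₁ = t₂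

/-- `W` is a (closed) subsystem of the triple system `T`. -/
def IsSub {α : Type*} (T : Finset (Finset α)) (W : Finset α) : Prop :=
  ∀ t ∈ T, 2 ≤ (t ∩ W).card → t ⊆ W

/-- `g` is an automorphism of the triple system `T`. -/
def IsAut {α : Type*} (T : Finset (Finset α)) (g : Equiv.Perm α) : Prop :=
  ∀ t : Finset α, t ∈ T ↔ t.image g ∈ T

/-- The automorphism group of a triple system, as a subgroup of the permutation group. -/
def autGroup {α : Type*} (T : Finset (Finset α)) : Subgroup (Equiv.Perm α) where
  carrier := {g : Equiv.Perm α | IsAut T g}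
  one_mem' := by
    intro t
    simp
  mul_mem' := by
    intro a b ha hb t
    have h1 := hb t
    have h2 := ha (t.image b)
    have key : t.image ⇑(a * b) = (t.image ⇑b).image ⇑a := by
      rw [Equiv.Perm.coe_mul, Finset.image_image]
    rw [key, ← h2]
    exact h1
  inv_mem' := by
    intro a ha t
    have h := ha (t.image ⇑a⁻¹)
    have key : (t.image ⇑a⁻¹).image ⇑a = t := by
      rw [Finset.image_image]
      have hc : (⇑a ∘ ⇑a⁻¹) = id := by
        funext x
        simp
      rw [hc, Finset.image_id]
    rw [key] at h
    exact h.symm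

/-- `φ` embeds the triple system `S` onto a subsystem of `T`: it is injective, maps
triples of `S` to triples of `T`, and the triples of `T` inside the image of `φ` are
precisely the images of the triples of `S`. -/
def IsCopy {α β : Type*} [Fintype α] (S : Finset (Finset α)) (T : Finset (Finset β))
    (φ : α → β) : Prop :=
  Function.Injective φ ∧ (∀ s ∈ S, s.image φ ∈ T) ∧
    ∀ t ∈ T, t ⊆ Finset.univ.image φ → ∃ s ∈ S, t = s.image φ

/-- The point set `W` is invariant under every automorphism of `T`. -/
def AutInvariant {β : Type*} (T : Finset (Finset β)) (W : Finset β) : Prop :=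
  ∀ g : Equiv.Perm β, IsAut T g → W.image g = W

/-- For the copy of `S` inside `T` given by `φ`, restriction gives a group isomorphism
from `Aut T` onto `Aut S`: every automorphism of `T` induces (via `φ`) an automorphism
of `S`, and every automorphism of `S` is induced by exactly one automorphism of `T`. -/
def AutRestrictIso {α β : Type*} (T : Finset (Finset β)) (S : Finset (Finset α))
    (φ : α → β) : Prop :=
  (∀ g : Equiv.Perm β, IsAut T g →
      ∃ h : Equiv.Perm α, IsAut S h ∧ ∀ x : α, g (φ x) = φ (h x)) ∧
    ∀ h : Equiv.Perm α, IsAut S h →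
      ∃! g : Equiv.Perm β, IsAut T g ∧ ∀ x : α, g (φ x) = φ (h x)

/-- `φ` embeds `S` as an `Aut T`-invariant subsystem of `T` on which `Aut T` induces
the full automorphism group of `S`, with `Aut T ≅ Aut S` via restriction. -/
def FullEmbedding {α β : Type*} [Fintype α] (S : Finset (Finset α)) (T : Finset (Finset β))
    (φ : α → β) : Prop :=
  IsCopy S T φ ∧ AutInvariant T (Finset.univ.image φ) ∧ AutRestrictIso T S φ

/-- The points of the projective space `PG(n,2)`: nonzero vectors of `GF(2)^{n+1}`. -/
abbrev PGPoint (n : ℕ) := {x : Fin (n + 1) → ZMod 2 // x ≠ 0}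

/-- The lines of `PG(n,2)`: 3-sets of nonzero vectors summing to `0`. -/
def PGTriples (n : ℕ) : Finset (Finset (PGPoint n)) :=
  Finset.univ.filter fun t : Finset (PGPoint n) =>
    t.card = 3 ∧ ∑ v ∈ t, (v : Fin (n + 1) → ZMod 2) = 0

/-- The smallest subsystem of `T` containing the point set `P`. -/
def GeneratedSub {α : Type*} [Fintype α] (T : Finset (Finset α)) (P : Finset α) : Finset α :=
  Finset.univ.filter fun x => ∀ W : Finset α, IsSub T W → P ⊆ W → x ∈ W

/-- `W` is a subsystem of `T` isomorphic to `PG(n,2)`. -/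
def IsPGSub {α : Type*} [Fintype α] (n : ℕ) (T : Finset (Finset α)) (W : Finset α) : Prop :=
  ∃ φ : PGPoint n → α, IsCopy (PGTriples n) T φ ∧ Finset.univ.image φ = W

/-- A triple system is `PG(2,2)`-paired if any two distinct points lie in at least two
subsystems isomorphic to `PG(2,2)`. -/
def PG22Paired {α : Type*} [Fintype α] (T : Finset (Finset α)) : Prop :=
  ∀ p q : α, p ≠ q → ∃ W₁ W₂ : Finset α, W₁ ≠ W₂ ∧
    (p ∈ W₁ ∧ q ∈ W₁ ∧ IsPGSub 2 T W₁) ∧ p ∈ W₂ ∧ q ∈ W₂ ∧ IsPGSub 2 T W₂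

/-- `T` is `PG(3,2)`-2-pointed with respect to the points `p, q`: any four points
including `p` and `q` generate a subsystem isomorphic to `PG(2,2)` or `PG(3,2)`. -/
def PG32TwoPointed {α : Type*} [Fintype α] (T : Finset (Finset α)) (p q : α) : Prop :=
  p ≠ q ∧ ∀ s : Finset α, s.card = 4 → p ∈ s → q ∈ s →
    IsPGSub 2 T (GeneratedSub T s) ∨ IsPGSub 3 T (GeneratedSub T s)

/-- The copy of `Y` inside `2Y+1`. -/
def dp0 {γ : Type*} (a : γ) : γ ⊕ γ ⊕ Unit := Sum.inl a

/-- The disjoint copy `Y₁` of `Y` inside `2Y+1`. -/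
def dp1 {γ : Type*} (a : γ) : γ ⊕ γ ⊕ Unit := Sum.inr (Sum.inl a)

/-- The extra point `*` of `2Y+1`. -/
def dpStar {γ : Type*} : γ ⊕ γ ⊕ Unit := Sum.inr (Sum.inr ())

/-- The triples of the Steiner triple system `2Y+1` built from a system `Y` with
triple set `T`. -/
def DoubleTriples {γ : Type*} [Fintype γ] (T : Finset (Finset γ)) :
    Finset (Finset (γ ⊕ γ ⊕ Unit)) :=
  Finset.univ.filter fun t : Finset (γ ⊕ γ ⊕ Unit) =>
    (∃ s ∈ T, t = s.image dp0) ∨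
    (∃ a : γ, t = {dpStar, dp0 a, dp1 a}) ∨
    (∃ a b c : γ, ({a, b, c} : Finset γ) ∈ T ∧ t = {dp1 a, dp1 b, dp0 c})

/-- The triples of the direct product of two triple systems. -/
def ProdTriples {α β : Type*} [Fintype α] [Fintype β]
    (TA : Finset (Finset α)) (TB : Finset (Finset β)) : Finset (Finset (α × β)) :=
  Finset.univ.filter fun t : Finset (α × β) =>
    (∃ a : α, ∃ s ∈ TB, t = s.image fun b => (a, b)) ∨
    (∃ b : β, ∃ s ∈ TA, t = s.image fun a => (a, b)) ∨
    (∃ a₁ a₂ a₃ : α, ∃ b₁ b₂ b₃ : β, ({a₁, a₂, a₃} : Finset α) ∈ TA ∧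
      ({b₁, b₂, b₃} : Finset β) ∈ TB ∧ t = {(a₁, b₁), (a₂, b₂), (a₃, b₃)})

/-- The triples of Moore's construction `U = X ∪ (V × A)`.  Here `TX` (on `δ`), `TV`
(on `α`), `TY` (on `γ`) are the triple sets of `X`, `V`, `Y`; `j : δ → γ` embeds `X`
as a subsystem of `Y` and `ℓ : A → γ` labels `Y − X` by the group `A`. -/
def MooreTriples {δ α γ A : Type*} [Fintype δ] [Fintype α] [Fintype A] [Group A]
    (TX : Finset (Finset δ)) (TV : Finset (Finset α)) (TY : Finset (Finset γ))
    (j : δ → γ) (ℓ : A → γ) : Finset (Finset (δ ⊕ α × A)) :=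
  Finset.univ.filter fun t : Finset (δ ⊕ α × A) =>
    (∃ s ∈ TX, t = s.image Sum.inl) ∨
    (∃ v : α, ∃ a₁ a₂ : A, ∃ x : δ, ({ℓ a₁, ℓ a₂, j x} : Finset γ) ∈ TY ∧
      t = {Sum.inr (v, a₁), Sum.inr (v, a₂), Sum.inl x}) ∨
    (∃ v : α, ∃ a₁ a₂ a₃ : A, ({ℓ a₁, ℓ a₂, ℓ a₃} : Finset γ) ∈ TY ∧
      t = {Sum.inr (v, a₁), Sum.inr (v, a₂), Sum.inr (v, a₃)}) ∨
    (∃ v₁ v₂ v₃ : α, ∃ a₁ a₂ a₃ : A, ({v₁, v₂, v₃} : Finset α) ∈ TV ∧ a₁ * a₂ * a₃ = 1 ∧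
      t = {Sum.inr (v₁, a₁), Sum.inr (v₂, a₂), Sum.inr (v₃, a₃)})

/-- The hypotheses of Moore's construction: `Y` and `V` are Steiner triple systems,
`A` is a cyclic group, `j` embeds `X` as a subsystem of `Y` (with triple set `TX`),
and `ℓ` is a bijective labeling of `Y − X` by `A`. -/
def MooreSetup {δ α γ A : Type*} [Fintype δ] [Group A]
    (TX : Finset (Finset δ)) (TV : Finset (Finset α)) (TY : Finset (Finset γ))
    (j : δ → γ) (ℓ : A → γ) : Prop :=
  IsSTS TY ∧ IsSTS TV ∧ IsCyclic A ∧ Function.Injective j ∧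
    IsSub TY (Finset.univ.image j) ∧ IsCopy TX TY j ∧
    Function.Injective ℓ ∧ Set.range ℓ = (Set.range j)ᶜ

/-- The subsystem `Y_v = X ∪ (v × A)` of Moore's construction. -/
def MooreY {δ α A : Type*} [Fintype δ] [Fintype A] (v : α) : Finset (δ ⊕ α × A) :=
  (Finset.univ.image (Sum.inl : δ → δ ⊕ α × A)) ∪
    Finset.univ.image fun a : A => (Sum.inr (v, a) : δ ⊕ α × A)

/-- A subsystem of type (3.1) of Moore's construction, where `ε` denotes the unique
involution `−1` of `A`: the seven points `x, (v_i, a_i), (v_i, −a_i)` for a triple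
`{v₁,v₂,v₃}` of `V`, with `a₁a₂a₃ = 1` and `{a_i, −a_i, x}` a triple of `Y`. -/
def MooreType31 {δ α γ A : Type*} [Group A] (TV : Finset (Finset α))
    (TY : Finset (Finset γ)) (j : δ → γ) (ℓ : A → γ) (ε : A)
    (W : Finset (δ ⊕ α × A)) : Prop :=
  ∃ v₁ v₂ v₃ : α, ∃ a₁ a₂ a₃ : A, ∃ x : δ,
    ({v₁, v₂, v₃} : Finset α) ∈ TV ∧ a₁ * a₂ * a₃ = 1 ∧
    ({ℓ a₁, ℓ (ε * a₁), j x} : Finset γ) ∈ TY ∧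
    ({ℓ a₂, ℓ (ε * a₂), j x} : Finset γ) ∈ TY ∧
    ({ℓ a₃, ℓ (ε * a₃), j x} : Finset γ) ∈ TY ∧
    W = {Sum.inl x, Sum.inr (v₁, a₁), Sum.inr (v₁, ε * a₁), Sum.inr (v₂, a₂),
         Sum.inr (v₂, ε * a₂), Sum.inr (v₃, a₃), Sum.inr (v₃, ε * a₃)}

/-- The point set of a family of triples. -/
def ptsOf {β : Type*} (T : Finset (Finset β)) : Finset β := T.sup id

/-- Adjacency of triples: two distinct triples of `T` meeting in a point. -/
def TriAdj {β : Type*} (T : Finset (Finset β)) (t s : Finset β) : Prop :=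
  t ∈ T ∧ s ∈ T ∧ t ≠ s ∧ (t ∩ s).Nonempty

/-- A partial Steiner triple system is cyclic if the graph whose vertices are its
triples, two joined when they meet, is a cycle (equivalently: it has at least three
triples, every triple meets exactly two others, and the graph is connected). -/
def IsCyclicPSTS {β : Type*} (T : Finset (Finset β)) : Prop :=
  3 ≤ T.card ∧ (∀ t ∈ T, (T.filter fun s => s ≠ t ∧ (s ∩ t).Nonempty).card = 2) ∧
    ∀ t ∈ T, ∀ s ∈ T, Relation.ReflTransGen (TriAdj T) t s

/-- The partial Steiner triple system `Q(z)` (for the parameter `n`), with triple set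
`T`, point set `P` and distinguished point `z`: two cyclic PSTSs `C₁, C₂` on
`2n+4` and `2n+6` points meeting exactly in the point `z`, which lies in two triples
of each, triples `{z, z'_i, z_i}` of `C_i` with `z'_i` in two triples of `C_i`, and a
new point `z'` in the single additional triple `{z'_1, z', z'_2}`. -/
def IsQ {β : Type*} (n : ℕ) (T : Finset (Finset β)) (P : Finset β) (z : β) : Prop :=
  ∃ C₁ C₂ : Finset (Finset β), ∃ z' z₁' z₂' z₁ z₂ : β,
    IsPSTS T ∧ IsCyclicPSTS C₁ ∧ IsCyclicPSTS C₂ ∧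
    (ptsOf C₁).card = 2 * n + 4 ∧ (ptsOf C₂).card = 2 * n + 6 ∧
    ptsOf C₁ ∩ ptsOf C₂ = {z} ∧
    (C₁.filter fun t => z ∈ t).card = 2 ∧ (C₂.filter fun t => z ∈ t).card = 2 ∧
    ({z, z₁', z₁} : Finset β) ∈ C₁ ∧ (C₁.filter fun t => z₁' ∈ t).card = 2 ∧
    ({z, z₂', z₂} : Finset β) ∈ C₂ ∧ (C₂.filter fun t => z₂' ∈ t).card = 2 ∧
    z' ∉ ptsOf C₁ ∪ ptsOf C₂ ∧
    T = C₁ ∪ C₂ ∪ {({z₁', z', z₂'} : Finset β)} ∧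
    P = ptsOf C₁ ∪ ptsOf C₂ ∪ {z'}

/-- Nonempty subsets of `β`: the points of the projective space `P` over `GF(2)`
built on a point set `β`. -/
abbrev NESet (β : Type*) := {s : Finset β // s.Nonempty}

/-- The triples of the projective space over `GF(2)` on the nonempty subsets of `β`:
3-sets of subsets with empty symmetric difference. -/
def sdTriples (β : Type*) [Fintype β] : Finset (Finset (NESet β)) :=
  Finset.univ.filter fun t : Finset (NESet β) =>
    ∃ a b c : NESet β, a ≠ b ∧ a ≠ c ∧ b ≠ c ∧ t = {a, b, c} ∧
      symmDiff (symmDiff a.1 b.1) c.1 = ∅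

/-- The singleton `{a}` as a point of the projective space. -/
def sEl {β : Type*} (a : β) : NESet β := ⟨{a}, Finset.singleton_nonempty a⟩

/-- The pair `{a,b}` as a point of the projective space. -/
def pEl {β : Type*} (a b : β) : NESet β := ⟨{a, b}, Finset.insert_nonempty a {b}⟩

/-- The triples of `P` removed in Cameron's construction, for each triple `{a,b,c}`
of `V'`. -/
def removedTriples {β : Type*} [Fintype β] (TV' : Finset (Finset β)) :
    Finset (Finset (NESet β)) :=
  Finset.univ.filter fun t : Finset (NESet β) =>
    ∃ a b c : β, ({a, b, c} : Finset β) ∈ TV' ∧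
      (t = {pEl a b, pEl a c, pEl b c} ∨ t = {sEl a, sEl b, pEl a b} ∨
       t = {sEl a, sEl c, pEl a c} ∨ t = {sEl b, sEl c, pEl b c})

/-- The new triples of Cameron's construction, for each triple `{a,b,c}` of `V'`. -/
def addedTriples {β : Type*} [Fintype β] (TV' : Finset (Finset β)) :
    Finset (Finset (NESet β)) :=
  Finset.univ.filter fun t : Finset (NESet β) =>
    ∃ a b c : β, ({a, b, c} : Finset β) ∈ TV' ∧
      (t = {sEl a, sEl b, sEl c} ∨ t = {sEl a, pEl a b, pEl a c} ∨
       t = {sEl b, pEl a b, pEl b c} ∨ t = {sEl c, pEl a c, pEl b c})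

/-- The Steiner triple system `U` of Cameron's construction obtained from the
projective space `P` and the partial system `V'`. -/
def CameronSTS {β : Type*} [Fintype β] (TV' : Finset (Finset β)) :
    Finset (Finset (NESet β)) :=
  (sdTriples β \ removedTriples TV') ∪ addedTriples TV'

/-- A Steiner quasigroup: the multiplication of a Steiner triple system, sending two distinct
points to the third point of their triple and fixing the diagonal. -/
structure IsSquag {α : Type*} (m : α → α → α) : Prop where
  idem : ∀ x, m x x = x
  comm : ∀ x y, m x y = m y x
  inv : ∀ x y, m x (m x y) = y

namespace IsSquag

variable {α β : Type*} {m : α → α → α}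

lemma eq_comm_right (h : IsSquag m) {x y z : α} : m x y = z ↔ m x z = y :=
  ⟨fun e => by rw [← e, h.inv], fun e => by rw [← e, h.inv]⟩

lemma ne_left (h : IsSquag m) {x y : α} (hxy : x ≠ y) : m x y ≠ x := fun e =>
  hxy (by rw [h.eq_comm_right, h.idem] at e; exact e)

lemma ne_right (h : IsSquag m) {x y : α} (hxy : x ≠ y) : m x y ≠ y := by
  rw [h.comm]; exact h.ne_left hxy.symm

/-- Transport of a Steiner quasigroup along a bijection. -/
lemma transport (h : IsSquag m) (e : α ≃ β) :
    IsSquag fun a b => e (m (e.symm a) (e.symm b)) where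
  idem x := by simp [h.idem]
  comm x y := by simp [h.comm (e.symm x)]
  inv x y := by simp [h.inv]

end IsSquag

/-- There is a Steiner quasigroup with `n` elements. -/
def HasSquag (n : ℕ) : Prop := ∃ m : Fin n → Fin n → Fin n, IsSquag m

lemma IsSquag.hasSquag {α : Type*} [Fintype α] {m : α → α → α} (h : IsSquag m) :
    HasSquag (Fintype.card α) :=
  ⟨_, h.transport (Fintype.equivFin α)⟩

lemma HasSquag.exists_on {n : ℕ} (h : HasSquag n) (α : Type*) [Fintype α]
    (hα : Fintype.card α = n) : ∃ m : α → α → α, IsSquag m := by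
  obtain ⟨m, hm⟩ := h
  exact ⟨_, hm.transport (Fintype.equivFinOfCardEq hα).symm⟩

lemma hasSquag_one : HasSquag 1 :=
  ⟨fun x _ => x, ⟨fun _ => rfl, fun _ _ => Subsingleton.elim _ _, fun _ _ => Subsingleton.elim _ _⟩⟩

/-- Bose's construction. -/
lemma hasSquag_three_mul (k : ℕ) (hk : Odd k) : HasSquag (3 * k) := by
  have : NeZero k := ⟨by rintro rfl; simp at hk⟩
  obtain ⟨r, hr⟩ := hk
  let t : ZMod k := (r : ZMod k) + 1
  have ht : 2 * t = 1 := by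
    have h0 : ((2 * r + 1 : ℕ) : ZMod k) = 0 := by rw [← hr]; simp
    push_cast at h0
    linear_combination h0
  have two_cancel : ∀ a b : ZMod k, 2 * a = 2 * b → a = b := fun a b h => by
    linear_combination t * h + (b - a) * ht
  let m : ZMod k × ZMod 3 → ZMod k × ZMod 3 → ZMod k × ZMod 3 := fun x y =>
    if x.1 = y.1 then (x.1, -x.2 - y.2)
    else if x.2 = y.2 then (t * (x.1 + y.1), x.2 + 1)
    else if y.2 = x.2 + 1 then (2 * y.1 - x.1, x.2)
    else (2 * x.1 - y.1, y.2)
  have z2 : ∀ e : ZMod 3, -e - e = e := by decide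
  have z3 : ∀ e f : ZMod 3, -e - f = -f - e := by decide
  have z5 : ∀ e f : ZMod 3, e ≠ f → (f = e + 1 ∧ e ≠ f + 1) ∨ (f ≠ e + 1 ∧ e = f + 1) := by
    decide
  have hm : IsSquag m := by
    refine ⟨?_, ?_, ?_⟩
    · rintro ⟨i, e⟩
      simp [m, z2]
    · rintro ⟨i, e⟩ ⟨j, f⟩
      by_cases hij : i = j
      · simp [m, hij, z3 e f]
      by_cases hef : e = f
      · simp [m, hij, hef, Ne.symm hij, add_comm i j]
      rcases z5 e f hef with ⟨h1, h2⟩ | ⟨h1, h2⟩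
      · simp only [m]
        rw [if_neg hij, if_neg hef, if_pos h1, if_neg (Ne.symm hij), if_neg (Ne.symm hef), if_neg h2]
      · simp only [m]
        rw [if_neg hij, if_neg hef, if_neg h1, if_neg (Ne.symm hij), if_neg (Ne.symm hef), if_pos h2]
    · rintro ⟨i, e⟩ ⟨j, f⟩
      by_cases hij : i = j
      · simp [m, hij]
      by_cases hef : e = f
      · subst hef
        have hne : i ≠ t * (i + j) := fun h => hij (by linear_combination 2 * h + (i + j) * ht)
        have : 2 * (t * (i + j)) - i = j := by linear_combination (i + j) * ht
        simp [m, hij, hne, this]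
      rcases z5 e f hef with ⟨h1, h2⟩ | ⟨h1, h2⟩
      · have hne : i ≠ 2 * j - i := fun h => hij (two_cancel _ _ (by linear_combination h))
        have h3 : t * (i + (2 * j - i)) = j := by linear_combination j * ht
        simp only [m]
        rw [if_neg hij, if_neg hef, if_pos h1]
        simp only
        rw [if_neg hne, if_pos trivial, h3, h1]
      · have hne : i ≠ 2 * i - j := fun h => hij (by linear_combination -h)
        simp only [m]
        rw [if_neg hij, if_neg hef, if_neg h1]
        simp only
        rw [if_neg hne, if_neg hef, if_neg h1]
        simp
  have := hm.hasSquag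
  rwa [Fintype.card_prod, ZMod.card, ZMod.card, mul_comm] at this

section Fill

variable {X Γ : Type*} {K : Γ → Type*}

/-- The embedding of `X ⊕ K g` as the flat over the group `g`. -/
def liftFlat (g : Γ) : X ⊕ K g → X ⊕ Σ g, K g
  | .inl x => .inl x
  | .inr a => .inr ⟨g, a⟩

/-- Fill the groups of a group divisible design with systems sharing the hole `X`: points of
different groups are multiplied by `c`, and `fill g` is used on `X ⊕ K g`. -/
def fillOp (mX : X → X → X) (fill : ∀ g, X ⊕ K g → X ⊕ K g → X ⊕ K g)
    (c : (Σ g, K g) → (Σ g, K g) → Σ g, K g) : (X ⊕ Σ g, K g) → (X ⊕ Σ g, K g) → X ⊕ Σ g, K g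
  | .inl x, .inl y => .inl (mX x y)
  | .inl x, .inr ⟨g, a⟩ => liftFlat g (fill g (.inl x) (.inr a))
  | .inr ⟨g, a⟩, .inl x => liftFlat g (fill g (.inr a) (.inl x))
  | .inr ⟨g, a⟩, .inr ⟨h, b⟩ =>
    if e : g = h then liftFlat h (fill h (.inr (e ▸ a)) (.inr b)) else .inr (c ⟨g, a⟩ ⟨h, b⟩)

variable {mX : X → X → X} {fill : ∀ g, X ⊕ K g → X ⊕ K g → X ⊕ K g}
  {c : (Σ g, K g) → (Σ g, K g) → Σ g, K g}

lemma fillOp_lift (hX : ∀ g x y, fill g (.inl x) (.inl y) = .inl (mX x y)) (g : Γ)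
    (p q : X ⊕ K g) :
    fillOp mX fill c (liftFlat g p) (liftFlat g q) = liftFlat g (fill g p q) := by
  rcases p with x | a <;> rcases q with y | b <;> simp [liftFlat, fillOp, hX]

lemma fillOp_cross {p q : Σ g, K g} (h : p.1 ≠ q.1) :
    fillOp mX fill c (.inr p) (.inr q) = .inr (c p q) := by
  obtain ⟨g, a⟩ := p
  obtain ⟨g', b⟩ := q
  exact dif_neg h

lemma flat_or_cross (p q : X ⊕ Σ g, K g) [Nonempty Γ] :
    (∃ g p' q', p = liftFlat g p' ∧ q = liftFlat g q') ∨
      ∃ p' q', p = .inr p' ∧ q = .inr q' ∧ p'.1 ≠ q'.1 := by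
  rcases p with x | ⟨g, a⟩ <;> rcases q with y | ⟨h, b⟩
  · exact Or.inl ⟨Classical.arbitrary Γ, .inl x, .inl y, rfl, rfl⟩
  · exact Or.inl ⟨h, .inl x, .inr b, rfl, rfl⟩
  · exact Or.inl ⟨g, .inr a, .inl y, rfl, rfl⟩
  · by_cases e : g = h
    · subst e
      exact Or.inl ⟨g, .inr a, .inr b, rfl, rfl⟩
    · exact Or.inr ⟨_, _, rfl, rfl, e⟩

lemma isSquag_fillOp [Nonempty Γ] (hX : ∀ g x y, fill g (.inl x) (.inl y) = .inl (mX x y))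
    (hfill : ∀ g, IsSquag (fill g)) (hcomm : ∀ p q, p.1 ≠ q.1 → c p q = c q p)
    (hne : ∀ p q, p.1 ≠ q.1 → p.1 ≠ (c p q).1) (hinv : ∀ p q, p.1 ≠ q.1 → c p (c p q) = q) :
    IsSquag (fillOp mX fill c) where
  idem p := by
    have : ∃ g p', p = liftFlat g p' := by
      rcases flat_or_cross p p with ⟨g, p', _, h, _⟩ | ⟨p', _, h, _, _⟩
      · exact ⟨g, p', h⟩
      · exact ⟨p'.1, .inr p'.2, h⟩
    obtain ⟨g, p', rfl⟩ := this
    rw [fillOp_lift hX, (hfill g).idem]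
  comm p q := by
    rcases flat_or_cross p q with ⟨g, p', q', rfl, rfl⟩ | ⟨p', q', rfl, rfl, h⟩
    · rw [fillOp_lift hX, fillOp_lift hX, (hfill g).comm]
    · rw [fillOp_cross h, fillOp_cross h.symm, hcomm _ _ h]
  inv p q := by
    rcases flat_or_cross p q with ⟨g, p', q', rfl, rfl⟩ | ⟨p', q', rfl, rfl, h⟩
    · rw [fillOp_lift hX, fillOp_lift hX, (hfill g).inv]
    · rw [fillOp_cross h, fillOp_cross (hne _ _ h), hinv _ _ h]

end Fill

/-- There is a Steiner quasigroup with `x + a` elements having a closed subset of size `x`. -/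
def HasHoledSquag (x a : ℕ) : Prop :=
  ∃ (m : Fin x ⊕ Fin a → Fin x ⊕ Fin a → Fin x ⊕ Fin a) (mX : Fin x → Fin x → Fin x),
    IsSquag m ∧ ∀ y z, m (.inl y) (.inl z) = .inl (mX y z)

lemma HasHoledSquag.hasSquag {x a : ℕ} (h : HasHoledSquag x a) : HasSquag (x + a) := by
  obtain ⟨m, _, hm, _⟩ := h
  simpa using hm.hasSquag

lemma IsSquag.hasHoledSquag {α : Type*} [Fintype α] {m : α → α → α} (hm : IsSquag m) {x a : ℕ}
    (P : α → Prop) (hP : ∀ y z, P y → P z → P (m y z))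
    (hx : Nat.card {y // P y} = x) (ha : Nat.card {y // ¬P y} = a) :
    HasHoledSquag x a := by
  let e : α ≃ Fin x ⊕ Fin a := (Equiv.sumCompl P).symm.trans
    (Equiv.sumCongr (Finite.equivFinOfCardEq hx) (Finite.equivFinOfCardEq ha))
  have key : ∀ y z, ∃ w : Fin x, e (m (e.symm (.inl y)) (e.symm (.inl z))) = .inl w := by
    intro y z
    have h : P (m (e.symm (.inl y)) (e.symm (.inl z))) := by
      apply hP <;> simp only [e, Equiv.symm_trans_apply, Equiv.symm_symm, Equiv.sumCongr_symm,
        Equiv.sumCongr_apply, Sum.map_inl, Equiv.sumCompl_apply_inl] <;> exact Subtype.property _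
    refine ⟨Finite.equivFinOfCardEq hx ⟨_, h⟩, ?_⟩
    simp only [e, Equiv.trans_apply, Equiv.sumCompl_symm_apply_of_pos h, Equiv.sumCongr_apply,
      Sum.map_inl]
  choose mX hmX using key
  exact ⟨_, mX, hm.transport e, hmX⟩

/-- The group divisible designs with block size three and type `2 ^ 4` (if `τ` is true; it is the
affine plane of order three with a point removed) or `2 ^ 3` (on the groups `0, 1, 2`,
if `τ` is false). -/
def blockOp (τ : Bool) (x y : Fin 4 × Bool) : Fin 4 × Bool :=
  let code : Fin 4 × Bool → Fin 8 := fun z => ⟨2 * z.1 + z.2.toNat, by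
    have := z.1.2
    have := z.2.toNat_lt
    omega⟩
  let decode : Fin 8 → Fin 4 × Bool := fun n => (⟨n / 2, by omega⟩, n.1 % 2 == 1)
  bif τ then decode (![![0, 0, 5, 7, 6, 2, 4, 3], ![0, 0, 6, 4, 3, 7, 2, 5],
    ![5, 6, 0, 0, 7, 0, 1, 4], ![7, 4, 0, 0, 1, 6, 5, 0], ![6, 3, 7, 1, 0, 0, 0, 2],
    ![2, 7, 0, 6, 0, 0, 3, 1], ![4, 2, 1, 5, 0, 3, 0, 0], ![3, 5, 4, 0, 2, 1, 0, 0]]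
      (code x) (code y))
  else (3 - x.1 - y.1, xor x.2 y.2)

set_option synthInstance.maxSize 100000 in
set_option synthInstance.maxHeartbeats 100000 in
lemma blockOp_spec : ∀ (τ : Bool) (x y : Fin 4 × Bool), x.1 ≠ y.1 →
    (τ = false → x.1 ≠ 3 ∧ y.1 ≠ 3) →
    x.1 ≠ (blockOp τ x y).1 ∧ (τ = false → (blockOp τ x y).1 ≠ 3) ∧
      blockOp τ y x = blockOp τ x y ∧ blockOp τ x (blockOp τ x y) = y := by
  decide

/-- The four coordinates of the blocks of a transversal design with groups `ZMod n`. -/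
def tdCoord {n : ℕ} (β : ZMod n × ZMod n) : Fin 4 → ZMod n :=
  ![β.1, β.2, β.1 + β.2, β.1 - β.2]

lemma tdCoord_existsUnique {n : ℕ} (hn : Odd n) {g h : Fin 4} (hgh : g ≠ h) (i j : ZMod n) :
    ∃! β : ZMod n × ZMod n, tdCoord β g = i ∧ tdCoord β h = j := by
  obtain ⟨r, hr⟩ := hn
  obtain ⟨t, ht⟩ : ∃ t : ZMod n, 2 * t = 1 := by
    have h0 : ((2 * r + 1 : ℕ) : ZMod n) = 0 := by rw [← hr]; simp
    push_cast at h0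
    exact ⟨(r : ZMod n) + 1, by linear_combination h0⟩
  have main : ∀ g h : Fin 4, g < h → ∀ i j : ZMod n,
      ∃! β : ZMod n × ZMod n, tdCoord β g = i ∧ tdCoord β h = j := by
    intro g h hgh i j
    fin_cases g <;> fin_cases h <;> first | (exact absurd hgh (by decide)) | skip
    · refine ⟨(i, j), by simp [tdCoord], ?_⟩
      rintro ⟨a, b⟩ ⟨h1, h2⟩
      simp [tdCoord] at h1 h2
      simp [h1, h2]
    · refine ⟨(i, j - i), by simp [tdCoord], ?_⟩
      rintro ⟨a, b⟩ ⟨h1, h2⟩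
      simp [tdCoord] at h1 h2
      simp [← h1, ← h2]
    · refine ⟨(i, i - j), by simp [tdCoord], ?_⟩
      rintro ⟨a, b⟩ ⟨h1, h2⟩
      simp [tdCoord] at h1 h2
      simp [← h1, ← h2]
    · refine ⟨(j - i, i), by simp [tdCoord], ?_⟩
      rintro ⟨a, b⟩ ⟨h1, h2⟩
      simp [tdCoord] at h1 h2
      simp [← h1, ← h2]
    · refine ⟨(j + i, i), by simp [tdCoord], ?_⟩
      rintro ⟨a, b⟩ ⟨h1, h2⟩
      simp [tdCoord] at h1 h2
      simp [← h1, ← h2]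
    · refine ⟨(t * (i + j), t * (i - j)), ?_, ?_⟩
      · simp only [tdCoord]
        constructor
        · show t * (i + j) + t * (i - j) = i
          linear_combination i * ht
        · show t * (i + j) - t * (i - j) = j
          linear_combination j * ht
      · rintro ⟨a, b⟩ ⟨h1, h2⟩
        replace h1 : a + b = i := h1
        replace h2 : a - b = j := h2
        refine Prod.ext ?_ ?_
        · show a = t * (i + j)
          rw [← h1, ← h2]
          linear_combination -a * ht
        · show b = t * (i - j)
          rw [← h1, ← h2]
          linear_combination -b * ht
  rcases lt_or_gt_of_ne hgh with h1 | h1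
  · exact main g h h1 i j
  · simpa only [and_comm] using main h g h1 j i

/-- The block through two points of different groups. -/
def tdBlock {n : ℕ} (g h : Fin 4) (i j : ZMod n) : ZMod n × ZMod n :=
  Classical.epsilon fun β => tdCoord β g = i ∧ tdCoord β h = j

lemma tdBlock_spec {n : ℕ} (hn : Odd n) {g h : Fin 4} (hgh : g ≠ h) (i j : ZMod n) :
    tdCoord (tdBlock g h i j) g = i ∧ tdCoord (tdBlock g h i j) h = j :=
  Classical.epsilon_spec (p := fun β : ZMod n × ZMod n => tdCoord β g = i ∧ tdCoord β h = j)
    (tdCoord_existsUnique hn hgh i j).exists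

lemma tdBlock_eq {n : ℕ} (hn : Odd n) {g h : Fin 4} (hgh : g ≠ h) {i j : ZMod n}
    {β : ZMod n × ZMod n} (h1 : tdCoord β g = i) (h2 : tdCoord β h = j) :
    tdBlock g h i j = β :=
  (tdCoord_existsUnique hn hgh i j).unique (tdBlock_spec hn hgh i j) ⟨h1, h2⟩

/-- The groups of the truncated transversal design with every point doubled: the last group is
restricted to the indices in `T`. -/
abbrev TruncGroup {n : ℕ} (T : Set (ZMod n)) (g : Fin 4) : Type :=
  {i : ZMod n // g = 3 → i ∈ T} × Bool

/-- Multiplication of points of different groups in the doubled truncated transversal design. -/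
def truncOp {n : ℕ} (T : Set (ZMod n)) (p q : Σ g, TruncGroup T g) : Σ g, TruncGroup T g :=
  let β := tdBlock p.1 q.1 p.2.1.1 q.2.1.1
  let z := blockOp (decide (tdCoord β 3 ∈ T)) (p.1, p.2.2) (q.1, q.2.2)
  if h : z.1 = 3 → tdCoord β z.1 ∈ T then ⟨z.1, ⟨tdCoord β z.1, h⟩, z.2⟩ else p

lemma truncOp_eq {n : ℕ} (hn : Odd n) (T : Set (ZMod n)) {p q : Σ g, TruncGroup T g}
    (hpq : p.1 ≠ q.1) {β : ZMod n × ZMod n} (h1 : tdCoord β p.1 = p.2.1.1)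
    (h2 : tdCoord β q.1 = q.2.1.1) {z : Fin 4 × Bool}
    (hz : blockOp (decide (tdCoord β 3 ∈ T)) (p.1, p.2.2) (q.1, q.2.2) = z)
    (h : z.1 = 3 → tdCoord β z.1 ∈ T) :
    truncOp T p q = ⟨z.1, ⟨tdCoord β z.1, h⟩, z.2⟩ := by
  subst hz
  obtain rfl := tdBlock_eq hn hpq h1 h2
  simp only [truncOp]
  rw [dif_pos h]

/-- The data describing the product of two points of different groups. -/
lemma exists_trunc {n : ℕ} (hn : Odd n) (T : Set (ZMod n)) {p q : Σ g, TruncGroup T g}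
    (hpq : p.1 ≠ q.1) : ∃ (β : ZMod n × ZMod n) (z : Fin 4 × Bool)
      (h : z.1 = 3 → tdCoord β z.1 ∈ T), tdCoord β p.1 = p.2.1.1 ∧ tdCoord β q.1 = q.2.1.1 ∧
      truncOp T p q = ⟨z.1, ⟨tdCoord β z.1, h⟩, z.2⟩ ∧ p.1 ≠ z.1 ∧
      truncOp T q p = truncOp T p q ∧ truncOp T p (truncOp T p q) = q := by
  obtain ⟨h1, h2⟩ := tdBlock_spec hn hpq p.2.1.1 q.2.1.1
  set β := tdBlock p.1 q.1 p.2.1.1 q.2.1.1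
  have hT : decide (tdCoord β 3 ∈ T) = false → p.1 ≠ 3 ∧ q.1 ≠ 3 := by
    intro h
    rw [decide_eq_false_iff_not] at h
    constructor
    · intro h3
      have := p.2.1.2 h3
      rw [← h1, h3] at this
      exact h this
    · intro h3
      have := q.2.1.2 h3
      rw [← h2, h3] at this
      exact h this
  obtain ⟨b1, b2, b3, b4⟩ := blockOp_spec (decide (tdCoord β 3 ∈ T)) (p.1, p.2.2) (q.1, q.2.2)
    hpq hT
  set z := blockOp (decide (tdCoord β 3 ∈ T)) (p.1, p.2.2) (q.1, q.2.2) with hz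
  have h : z.1 = 3 → tdCoord β z.1 ∈ T := by
    intro h3
    by_contra hc
    rw [h3] at hc
    exact b2 (decide_eq_false hc) h3
  have e1 := truncOp_eq hn T hpq h1 h2 hz.symm h
  refine ⟨β, z, h, h1, h2, e1, b1, ?_, ?_⟩
  · rw [e1, truncOp_eq hn T hpq.symm h2 h1 b3 h]
  · rw [e1, truncOp_eq hn T (q := ⟨z.1, ⟨tdCoord β z.1, h⟩, z.2⟩) b1 h1 rfl b4
      (fun h3 => by rw [h2]; exact q.2.1.2 h3)]
    obtain ⟨g, ⟨i, hi⟩, e⟩ := q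
    simp only at h2 ⊢
    congr 2
    exact Subtype.ext h2

/-- A flat of a filled group divisible design is a hole. -/
lemma hasHoledSquag_of_fill {X Γ : Type} {K : Γ → Type} [Fintype X] [Fintype Γ]
    [∀ g, Fintype (K g)] {mX : X → X → X} {fill : ∀ g, X ⊕ K g → X ⊕ K g → X ⊕ K g}
    {c : (Σ g, K g) → (Σ g, K g) → Σ g, K g} (hm : IsSquag (fillOp mX fill c))
    (hX : ∀ g x y, fill g (.inl x) (.inl y) = .inl (mX x y)) (g : Γ) {x a : ℕ}
    (hx : Fintype.card X + Fintype.card (K g) = x)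
    (ha : Fintype.card X + ∑ h, Fintype.card (K h) = x + a) : HasHoledSquag x a := by
  have hinj : Function.Injective (liftFlat (X := X) (K := K) g) := by
    rintro (x | a) (y | b) hab <;> simp_all [liftFlat]
  have e : (X ⊕ K g) ≃ {p // ∃ p', p = liftFlat (X := X) (K := K) g p'} :=
    (Equiv.ofInjective _ hinj).trans (Equiv.subtypeEquivRight fun p =>
      ⟨fun ⟨q, h⟩ => ⟨q, h.symm⟩, fun ⟨q, h⟩ => ⟨q, h.symm⟩⟩)
  have hcard : Nat.card {p // ∃ p', p = liftFlat (X := X) (K := K) g p'} = x := by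
    rw [← Nat.card_congr e, Nat.card_eq_fintype_card, Fintype.card_sum, hx]
  refine hm.hasHoledSquag _ ?_ hcard ?_
  · rintro _ _ ⟨p, rfl⟩ ⟨q, rfl⟩
    exact ⟨_, fillOp_lift hX g p q⟩
  · rw [Nat.card_eq_fintype_card, Fintype.card_subtype_compl, ← Nat.card_eq_fintype_card,
      ← Nat.card_eq_fintype_card, hcard, Nat.card_eq_fintype_card, Fintype.card_sum,
      Fintype.card_sigma]
    omega

lemma hasHoledSquag_trunc {n t : ℕ} (hn : Odd n) (ht : t ≤ n) (h1 : HasSquag (2 * n + 1))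
    (h2 : HasSquag (2 * t + 1)) : HasHoledSquag (2 * t + 1) (6 * n) := by
  have : NeZero n := ⟨by rintro rfl; simp at hn⟩
  obtain ⟨T, hT⟩ : ∃ T : Set (ZMod n), Nat.card T = t := by
    obtain ⟨T, -, hT⟩ := Finset.exists_subset_card_eq
      (s := (Finset.univ : Finset (ZMod n))) (n := t) (by simpa [ZMod.card] using ht)
    exact ⟨T, by simpa using hT⟩
  have card3 : Fintype.card (TruncGroup T 3) = 2 * t := by
    have : Nat.card {i : ZMod n // (3 : Fin 4) = 3 → i ∈ T} = t :=
      (Nat.card_congr (Equiv.subtypeEquivRight (by simp))).trans hT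
    rw [← Nat.card_eq_fintype_card, Nat.card_prod, this, Nat.card_eq_fintype_card (α := Bool),
      Fintype.card_bool, mul_comm]
  have cardN : ∀ g : Fin 4, g ≠ 3 → Fintype.card (TruncGroup T g) = 2 * n := by
    intro g hg
    have : Nat.card {i : ZMod n // g = 3 → i ∈ T} = n :=
      (Nat.card_congr (Equiv.subtypeUnivEquiv fun i h => absurd h hg)).trans (Nat.card_zmod n)
    rw [← Nat.card_eq_fintype_card, Nat.card_prod, this, Nat.card_eq_fintype_card (α := Bool),
      Fintype.card_bool, mul_comm]
  have hfill : ∀ g : Fin 4, ∃ m : Unit ⊕ TruncGroup T g → Unit ⊕ TruncGroup T g →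
      Unit ⊕ TruncGroup T g, IsSquag m := by
    intro g
    by_cases hg : g = 3
    · subst hg
      refine h2.exists_on _ ?_
      rw [Fintype.card_sum, card3, Fintype.card_unit, add_comm]
    · refine h1.exists_on _ ?_
      rw [Fintype.card_sum, cardN g hg, Fintype.card_unit, add_comm]
  choose fill hfill using hfill
  have hX : ∀ g x y, fill g (.inl x) (.inl y) = .inl ((fun _ _ => ()) x y) := fun g x y =>
    (hfill g).idem _
  have hm : IsSquag (fillOp (fun _ _ => ()) fill (truncOp T)) := by
    refine isSquag_fillOp hX hfill ?_ ?_ ?_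
    · intro p q hpq
      obtain ⟨β, z, h, -, -, -, -, e, -⟩ := exists_trunc hn T hpq
      exact e.symm
    · intro p q hpq
      obtain ⟨β, z, h, -, -, e, hne, -, -⟩ := exists_trunc hn T hpq
      rw [e]
      exact hne
    · intro p q hpq
      obtain ⟨β, z, h, -, -, -, -, -, e⟩ := exists_trunc hn T hpq
      exact e
  refine hasHoledSquag_of_fill hm hX 3 ?_ ?_
  · rw [card3, Fintype.card_unit, add_comm]
  · rw [Fin.sum_univ_four, cardN 0 (by decide), cardN 1 (by decide), cardN 2 (by decide), card3,
      Fintype.card_unit]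
    omega

lemma hasSquag_twelve_mul_add_three (j : ℕ) : HasSquag (12 * j + 3) := by
  have := hasSquag_three_mul (4 * j + 1) ⟨2 * j, by ring⟩
  rwa [show 3 * (4 * j + 1) = 12 * j + 3 by ring] at this

lemma HasSquag.hasHoledSquag {x : ℕ} (hx : HasSquag x) (hodd : Odd x) {j : ℕ}
    (hj : x ≤ 12 * j + 3) : HasHoledSquag x (6 * (6 * j + 1)) := by
  obtain ⟨t, rfl⟩ := hodd
  refine hasHoledSquag_trunc ⟨3 * j, by ring⟩ (by omega) ?_ hx
  rw [show 2 * (6 * j + 1) + 1 = 12 * j + 3 by ring]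
  exact hasSquag_twelve_mul_add_three j

/-- Every admissible residue class contains the order of a Steiner triple system. -/
lemma exists_hasSquag_modEq (Q r : ℕ) (hQ : 0 < Q) (hr : r % 6 = 1 ∨ r % 6 = 3) :
    ∃ x, Odd x ∧ HasSquag x ∧ x ≡ r [MOD 36 * Q] := by
  have step : ∀ k x₀ : ℕ, Odd x₀ → HasSquag x₀ →
      ∃ x, Odd x ∧ HasSquag x ∧ x ≡ x₀ + 6 * k [MOD 36 * Q] := by
    intro k x₀ hodd h0
    induction k with
    | zero => exact ⟨x₀, hodd, h0, by rfl⟩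
    | succ k ih =>
      obtain ⟨x, hx1, hx2, hx3⟩ := ih
      have hle : x ≤ 12 * (Q * x) + 3 := by nlinarith
      have h := (hx2.hasHoledSquag hx1 hle).hasSquag
      refine ⟨_, ?_, h, ?_⟩
      · obtain ⟨y, rfl⟩ := hx1
        exact ⟨y + 3 * (6 * (Q * (2 * y + 1)) + 1), by ring⟩
      · have e : x + 6 * (6 * (Q * x) + 1) = x + 6 + 36 * Q * x := by ring
        have e' : x₀ + 6 * (k + 1) = x₀ + 6 * k + 6 := by ring
        rw [e, e']
        calc x + 6 + 36 * Q * x ≡ x + 6 + 0 [MOD 36 * Q] :=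
              Nat.ModEq.add_left _ (Nat.modEq_zero_iff_dvd.2 ⟨x, rfl⟩)
          _ ≡ x₀ + 6 * k + 6 [MOD 36 * Q] := by simpa using hx3.add_right 6
  rcases hr with hr | hr
  · obtain ⟨x, h1, h2, h3⟩ := step (r / 6) 1 (by decide) hasSquag_one
    exact ⟨x, h1, h2, by rwa [show 1 + 6 * (r / 6) = r by omega] at h3⟩
  · obtain ⟨x, h1, h2, h3⟩ := step (r / 6) 3 (by decide) (hasSquag_three_mul 1 (by decide))
    exact ⟨x, h1, h2, by rwa [show 3 + 6 * (r / 6) = r by omega] at h3⟩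

/-- Homomorphisms of multiplications. -/
def IsMulHom {α β : Type*} (m : α → α → α) (m' : β → β → β) (f : α → β) : Prop :=
  ∀ x y, f (m x y) = m' (f x) (f y)

lemma IsMulHom.symm {α β : Type*} {m : α → α → α} {m' : β → β → β} {e : α ≃ β} (h : IsMulHom m m' e) :
    IsMulHom m' m e.symm := fun x y => by
  rw [Equiv.symm_apply_eq, h]; simp

/-- The triples of the Steiner triple system of a Steiner quasigroup. -/
def triples {α : Type*} [Fintype α] (m : α → α → α) : Finset (Finset α) :=
  univ.filter fun t => ∃ x y, x ≠ y ∧ t = {x, y, m x y}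

section Triples

variable {α β : Type*} [Fintype α] [Fintype β] {m : α → α → α} {m' : β → β → β}

lemma mem_triples {t : Finset α} : t ∈ triples m ↔ ∃ x y, x ≠ y ∧ t = {x, y, m x y} := by
  simp [triples]

/-- A triple is determined by any two of its points. -/
lemma IsSquag.eq_of_mem_triples (hm : IsSquag m) {t : Finset α} (ht : t ∈ triples m) {x y : α}
    (hx : x ∈ t) (hy : y ∈ t) (hxy : x ≠ y) : t = {x, y, m x y} := by
  obtain ⟨a, b, hab, rfl⟩ := mem_triples.1 ht
  have h1 : m a (m a b) = b := hm.inv a b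
  have h2 : m b (m a b) = a := by rw [hm.comm a b, hm.inv]
  have h3 : m (m a b) a = b := by rw [hm.comm, h1]
  have h4 : m (m a b) b = a := by rw [hm.comm, h2]
  have h5 : m b a = m a b := hm.comm b a
  simp only [mem_insert, mem_singleton] at hx hy
  rcases hx with rfl | rfl | rfl <;> rcases hy with rfl | rfl | rfl <;>
    first
      | exact absurd rfl hxy
      | (ext z; simp only [h1, h2, h3, h4, h5, mem_insert, mem_singleton] <;> tauto)

lemma IsSquag.isSTS_triples (hm : IsSquag m) : IsSTS (triples m) := by
  refine ⟨fun t ht => ?_, fun p q hpq => ?_⟩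
  · obtain ⟨x, y, hxy, rfl⟩ := mem_triples.1 ht
    rw [card_eq_three]
    exact ⟨x, y, m x y, hxy, (hm.ne_left hxy).symm, (hm.ne_right hxy).symm, rfl⟩
  · refine ⟨{p, q, m p q}, ⟨mem_triples.2 ⟨p, q, hpq, rfl⟩, by simp, by simp⟩, ?_⟩
    rintro t ⟨ht, hp, hq⟩
    exact hm.eq_of_mem_triples ht hp hq hpq

/-- Every Steiner triple system is the system of triples of a Steiner quasigroup. -/
lemma IsSTS.exists_isSquag {T : Finset (Finset α)} (hT : IsSTS T) :
    ∃ m : α → α → α, IsSquag m ∧ T = triples m := by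
  have key : ∀ p q : α, ∃ r : α, (p = q → r = p) ∧
      (p ≠ q → ({p, q, r} : Finset α) ∈ T ∧ r ≠ p ∧ r ≠ q) := by
    intro p q
    by_cases hpq : p = q
    · exact ⟨p, fun _ => rfl, fun h => absurd hpq h⟩
    · obtain ⟨t, ⟨ht, hp, hq⟩, -⟩ := hT.2 p q hpq
      have hq' : q ∈ t.erase p := mem_erase.2 ⟨Ne.symm hpq, hq⟩
      have hcard : ((t.erase p).erase q).card = 1 := by
        rw [card_erase_of_mem hq', card_erase_of_mem hp, hT.1 t ht]
      obtain ⟨r, hr⟩ := card_eq_one.1 hcard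
      have hrt : r ∈ (t.erase p).erase q := by simp [hr]
      have e : ({p, q, r} : Finset α) = t := by
        rw [← insert_erase hp, ← insert_erase hq', hr]
      rw [mem_erase, mem_erase] at hrt
      exact ⟨r, fun h => absurd h hpq, fun _ => ⟨e ▸ ht, hrt.2.1, hrt.1⟩⟩
  choose m h1 h2 using key
  have uniq : ∀ p q r : α, p ≠ q → r ≠ p → r ≠ q → ({p, q, r} : Finset α) ∈ T → m p q = r := by
    intro p q r hpq hrp hrq ht
    have e := (hT.2 p q hpq).unique ⟨ht, by simp, by simp⟩
      ⟨(h2 p q hpq).1, by simp, by simp⟩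
    have : r ∈ ({p, q, m p q} : Finset α) := by rw [← e]; simp
    simp only [mem_insert, mem_singleton] at this
    tauto
  refine ⟨m, ⟨fun x => h1 x x rfl, fun x y => ?_, fun x y => ?_⟩, ?_⟩
  · by_cases hxy : x = y
    · rw [hxy]
    · obtain ⟨ht, hx, hy⟩ := h2 y x (Ne.symm hxy)
      exact uniq x y _ hxy hy hx (by rwa [insert_comm])
  · by_cases hxy : x = y
    · rw [h1 x y hxy, h1 x x rfl, hxy]
    · obtain ⟨ht, hx, hy⟩ := h2 x y hxy
      exact uniq x _ _ hx.symm (Ne.symm hxy) hy.symm (by rwa [pair_comm])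
  · ext t
    rw [mem_triples]
    constructor
    · intro ht
      obtain ⟨x, y, z, hxy, hxz, hyz, rfl⟩ := card_eq_three.1 (hT.1 t ht)
      exact ⟨x, y, hxy, by rw [uniq x y z hxy hxz.symm hyz.symm ht]⟩
    · rintro ⟨x, y, hxy, rfl⟩
      exact (h2 x y hxy).1

lemma IsMulHom.image_mem_triples {f : α → β} (hf : Function.Injective f) (h : IsMulHom m m' f)
    {t : Finset α} (ht : t ∈ triples m) : t.image f ∈ triples m' := by
  obtain ⟨x, y, hxy, rfl⟩ := mem_triples.1 ht
  exact mem_triples.2 ⟨f x, f y, hf.ne hxy, by simp [image_insert, h x y]⟩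

lemma isMulHom_iff_triples (hm : IsSquag m) (hm' : IsSquag m') (e : α ≃ β) :
    IsMulHom m m' e ↔ ∀ t : Finset α, t ∈ triples m ↔ t.image e ∈ triples m' := by
  constructor
  · intro h t
    refine ⟨h.image_mem_triples e.injective, fun ht => ?_⟩
    have := h.symm.image_mem_triples e.symm.injective ht
    simpa [image_image] using this
  · intro h x y
    by_cases hxy : x = y
    · rw [hxy, hm.idem, hm'.idem]
    have ht := (h {x, y, m x y}).1 (mem_triples.2 ⟨x, y, hxy, rfl⟩)
    have e1 := hm'.eq_of_mem_triples ht (x := e x) (y := e y) (by simp) (by simp)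
      (e.injective.ne hxy)
    have : e (m x y) ∈ ({e x, e y, m' (e x) (e y)} : Finset β) := by rw [← e1]; simp
    simp only [mem_insert, mem_singleton, e.injective.eq_iff] at this
    rcases this with h1 | h1 | h1
    · exact absurd h1 (hm.ne_left hxy)
    · exact absurd h1 (hm.ne_right hxy)
    · exact h1

/-- `φ` embeds the Steiner quasigroup `mV` in `mU`, and restriction along `φ` is an isomorphism of
the automorphism groups. -/
def IsFullSub {V U : Type*} (mV : V → V → V) (mU : U → U → U) (φ : V → U) : Prop :=
  Function.Injective φ ∧ IsMulHom mV mU φ ∧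
    (∀ g : Equiv.Perm U, IsMulHom mU mU g →
      ∃ h : Equiv.Perm V, IsMulHom mV mV h ∧ ∀ x, g (φ x) = φ (h x)) ∧
    ∀ h : Equiv.Perm V, IsMulHom mV mV h →
      ∃! g : Equiv.Perm U, IsMulHom mU mU g ∧ ∀ x, g (φ x) = φ (h x)

lemma IsFullSub.fullEmbedding (hm : IsSquag m) (hm' : IsSquag m') {φ : α → β}
    (h : IsFullSub m m' φ) : FullEmbedding (triples m) (triples m') φ := by
  have aut : ∀ g : Equiv.Perm α, IsAut (triples m) g ↔ IsMulHom m m g := fun g =>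
    (isMulHom_iff_triples hm hm g).symm
  have aut' : ∀ g : Equiv.Perm β, IsAut (triples m') g ↔ IsMulHom m' m' g := fun g =>
    (isMulHom_iff_triples hm' hm' g).symm
  obtain ⟨hinj, hhom, h1, h2⟩ := h
  refine ⟨⟨hinj, fun s hs => hhom.image_mem_triples hinj hs, fun t ht hsub => ?_⟩, ?_, ?_⟩
  · obtain ⟨x, y, hxy, rfl⟩ := mem_triples.1 ht
    obtain ⟨a, -, rfl⟩ := mem_image.1 (hsub (mem_insert_self _ _))
    obtain ⟨b, -, rfl⟩ := mem_image.1 (hsub (mem_insert_of_mem (mem_insert_self _ _)))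
    refine ⟨{a, b, m a b}, mem_triples.2 ⟨a, b, fun e => hxy (by rw [e]), rfl⟩, ?_⟩
    simp [image_insert, hhom a b]
  · intro g hg
    obtain ⟨k, -, hk⟩ := h1 g ((aut' g).1 hg)
    ext z
    simp only [mem_image, mem_univ, true_and, exists_exists_eq_and, hk]
    exact ⟨fun ⟨a, e⟩ => ⟨_, e⟩, fun ⟨a, e⟩ => ⟨k.symm a, by simpa using e⟩⟩
  · simp only [AutRestrictIso, aut, aut']
    exact ⟨h1, h2⟩

lemma IsFullSub.transport {V U U' : Type*} {mV : V → V → V} {mU : U → U → U} {φ : V → U}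
    (h : IsFullSub mV mU φ) (e : U ≃ U') :
    IsFullSub mV (fun a b => e (mU (e.symm a) (e.symm b))) (e ∘ φ) := by
  obtain ⟨hinj, hhom, h1, h2⟩ := h
  refine ⟨e.injective.comp hinj, fun x y => by simp [hhom x y], fun g hg => ?_, fun k hk => ?_⟩
  · obtain ⟨k, hk, hk'⟩ := h1 (e.trans (g.trans e.symm)) fun x y => by
      have := hg (e x) (e y)
      simp only [Equiv.symm_apply_apply] at this
      simp [this]
    refine ⟨k, hk, fun x => ?_⟩
    have := hk' x
    simpa [Equiv.symm_apply_eq] using this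
  · obtain ⟨g, ⟨hg, hg'⟩, huniq⟩ := h2 k hk
    refine ⟨e.symm.trans (g.trans e), ⟨fun x y => by simp [hg _ _], fun x => by simp [hg']⟩, ?_⟩
    rintro g' ⟨hg1, hg2⟩
    have := huniq (e.trans (g'.trans e.symm)) ⟨fun x y => by
      have := hg1 (e x) (e y)
      simp only [Equiv.symm_apply_apply] at this
      simp [this], fun x => by
        have := hg2 x
        simp only [Function.comp] at this
        simp [this]⟩
    ext x
    rw [← this]
    simp

end Triples

section Counting

variable {ι A : Type*} [Fintype ι] [Fintype A] [AddCommGroup A]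

lemma card_avoid_of_rank (M : Finset ι) (f : ι → ι) (h : ι → A → A)
    (hc : ∀ i ∈ M, f i = i → ∀ a b, h i a = h i b) (rank : ι → ℕ)
    (hrank : ∀ i ∈ M, f i ≠ i → rank (f i) < rank i) :
    (univ.filter fun s : ι → A => ∀ i ∈ M, s i ≠ h i (s (f i))).card * Fintype.card A ^ M.card ≤
      Fintype.card A ^ Fintype.card ι * (Fintype.card A - 1) ^ M.card := by
  let Φ : (ι → A) → ι → A := fun s i => if i ∈ M then s i - h i (s (f i)) else s i
  have hinj : Function.Injective Φ := by
    intro s t hst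
    have key : ∀ k i, rank i < k → s i = t i := by
      intro k
      induction k with
      | zero => intro i hi; omega
      | succ k ih =>
        intro i hi
        have e := congrFun hst i
        by_cases hiM : i ∈ M
        · simp only [Φ, if_pos hiM] at e
          have e' : h i (s (f i)) = h i (t (f i)) := by
            by_cases hfi : f i = i
            · exact hc i hiM hfi _ _
            · rw [ih (f i) (by have := hrank i hiM hfi; omega)]
          rw [e'] at e
          exact sub_left_injective e
        · simpa only [Φ, if_neg hiM] using e
    funext i
    exact key _ i (Nat.lt_succ_self _)
  have hsub : (univ.filter fun s : ι → A => ∀ i ∈ M, s i ≠ h i (s (f i))).image Φ ⊆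
      Fintype.piFinset fun i => if i ∈ M then univ.erase (0 : A) else univ := by
    intro t ht
    obtain ⟨s, hs, rfl⟩ := mem_image.1 ht
    rw [Fintype.mem_piFinset]
    intro i
    by_cases hiM : i ∈ M
    · simpa [Φ, hiM, sub_eq_zero] using (mem_filter.1 hs).2 i hiM
    · simp [hiM]
  have hle := card_le_card hsub
  rw [card_image_of_injective _ hinj, Fintype.card_piFinset] at hle
  have hprod : ∏ i, (if i ∈ M then univ.erase (0 : A) else univ).card =
      (Fintype.card A - 1) ^ M.card * Fintype.card A ^ (Fintype.card ι - M.card) := by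
    simp only [apply_ite Finset.card, card_erase_of_mem (mem_univ (0 : A)), card_univ]
    rw [prod_ite, prod_const, prod_const, filter_mem_eq_inter, univ_inter, filter_not,
      filter_mem_eq_inter, univ_inter, card_sdiff_of_subset (subset_univ _), card_univ]
  rw [hprod] at hle
  calc _ ≤ (Fintype.card A - 1) ^ M.card * Fintype.card A ^ (Fintype.card ι - M.card) *
        Fintype.card A ^ M.card := Nat.mul_le_mul_right _ hle
    _ = _ := by
      rw [mul_assoc, ← pow_add, Nat.sub_add_cancel (card_le_univ M), mul_comm]

/-- Few functions avoid, at every site of `M`, a value prescribed by another site. -/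
lemma exists_card_avoid_le (M : Finset ι) (f : ι → ι) (h : ι → A → A)
    (hc : ∀ i ∈ M, f i = i → ∀ a b, h i a = h i b) :
    ∃ r, M.card ≤ 2 * r ∧
      (univ.filter fun s : ι → A => ∀ i ∈ M, s i ≠ h i (s (f i))).card * Fintype.card A ^ r ≤
        Fintype.card A ^ Fintype.card ι * (Fintype.card A - 1) ^ r := by
  let e := Fintype.equivFin ι
  have main : ∀ M' ⊆ M, M.card ≤ 2 * M'.card → ∀ rank : ι → ℕ,
      (∀ i ∈ M', f i ≠ i → rank (f i) < rank i) → ∃ r, M.card ≤ 2 * r ∧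
      (univ.filter fun s : ι → A => ∀ i ∈ M, s i ≠ h i (s (f i))).card * Fintype.card A ^ r ≤
        Fintype.card A ^ Fintype.card ι * (Fintype.card A - 1) ^ r := by
    intro M' hM' hcard rank hrank
    refine ⟨M'.card, hcard, le_trans (Nat.mul_le_mul_right _ (card_le_card ?_))
      (card_avoid_of_rank M' f h (fun i hi => hc i (hM' hi)) rank hrank)⟩
    exact monotone_filter_right _ fun s _ hs i hi => hs i (hM' hi)
  have hsplit := card_filter_add_card_filter_not (s := M) (fun i => e (f i) < e i)
  rcases le_total (M.card) (2 * (M.filter fun i => e (f i) < e i).card) with h1 | h1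
  · exact main _ (filter_subset _ _) h1 (fun i => e i) fun i hi _ => (mem_filter.1 hi).2
  · refine main (M.filter fun i => ¬ e (f i) < e i) (filter_subset _ _) (by omega)
      (fun i => Fintype.card ι - e i) fun i hi hne => ?_
    have h2 := (mem_filter.1 hi).2
    have h3 : (e (f i) : ℕ) ≠ e i := fun h => hne (e.injective (Fin.ext h))
    have h4 := (e (f i)).2
    rw [Fin.lt_def] at h2
    show Fintype.card ι - (e (f i) : ℕ) < Fintype.card ι - (e i : ℕ)
    omega

lemma card_avoid_mul_two_pow_le (hA : Fintype.card A = 12) (M : Finset ι) (f : ι → ι)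
    (h : ι → A → A) (hc : ∀ i ∈ M, f i = i → ∀ a b, h i a = h i b) {L : ℕ}
    (hL : 16 * L ≤ M.card) :
    (univ.filter fun s : ι → A => ∀ i ∈ M, s i ≠ h i (s (f i))).card * 2 ^ L ≤
      12 ^ Fintype.card ι := by
  obtain ⟨r, hr, h1⟩ := exists_card_avoid_le M f h hc
  rw [hA] at h1
  have h2 : 2 ^ L * 11 ^ r ≤ 12 ^ r := by
    obtain ⟨d, rfl⟩ : ∃ d, r = 8 * L + d := ⟨r - 8 * L, by omega⟩
    calc 2 ^ L * 11 ^ (8 * L + d) = (2 * 11 ^ 8) ^ L * 11 ^ d := by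
          rw [pow_add, pow_mul, mul_pow, mul_assoc]
      _ ≤ (12 ^ 8) ^ L * 12 ^ d := by gcongr <;> norm_num
      _ = 12 ^ (8 * L + d) := by rw [pow_add, pow_mul]
  refine Nat.le_of_mul_le_mul_right ?_ (show 0 < 12 ^ r by positivity)
  calc _ = (univ.filter fun s : ι → A => ∀ i ∈ M, s i ≠ h i (s (f i))).card * 12 ^ r * 2 ^ L := by
        ring
    _ ≤ 12 ^ Fintype.card ι * 11 ^ r * 2 ^ L := Nat.mul_le_mul_right _ h1
    _ = 12 ^ Fintype.card ι * (2 ^ L * 11 ^ r) := by ring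
    _ ≤ 12 ^ Fintype.card ι * 12 ^ r := Nat.mul_le_mul_left _ h2

end Counting

lemma mul_succ_le_two_pow {a k : ℕ} (h : 4 * a ≤ k) : a * (k + 1) ≤ 2 ^ k := by
  have h1 : k / 2 + 1 ≤ 2 ^ (k / 2) := Nat.lt_two_pow_self
  have h2 : 2 ^ (k / 2) * 2 ^ (k / 2) ≤ 2 ^ k := by
    rw [← pow_add]
    exact Nat.pow_le_pow_right (by norm_num) (by omega)
  have h3 : 2 * a ≤ k / 2 + 1 := by omega
  have h4 : k + 1 ≤ 2 * (k / 2 + 1) := by omega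
  nlinarith [Nat.mul_le_mul h1 h1, Nat.mul_le_mul_left a h4, Nat.mul_le_mul_right (k / 2 + 1) h3]

lemma exists_factorial_sq_le (κ : ℕ) (hκ : 0 < κ) :
    ∃ c₀, ∀ c ≥ c₀, ∀ u ≤ κ * c, 4 * (u.factorial) ^ 2 ≤ 2 ^ (c ^ 2 / 64) := by
  refine ⟨256 * κ * (4 * (256 * κ * κ)) + 32, fun c hc u hu => ?_⟩
  set ρ := 256 * κ with hρ
  have hρ0 : 0 < ρ := by omega
  have hk : 4 * (ρ * κ) ≤ c / ρ := by
    rw [Nat.le_div_iff_mul_le hρ0]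
    nlinarith
  have hu2 : u ≤ 2 ^ (c / ρ) := by
    have h1 : c ≤ ρ * (c / ρ + 1) := (Nat.lt_mul_div_succ c hρ0).le
    calc u ≤ κ * c := hu
      _ ≤ κ * (ρ * (c / ρ + 1)) := Nat.mul_le_mul_left _ h1
      _ = ρ * κ * (c / ρ + 1) := by ring
      _ ≤ 2 ^ (c / ρ) := mul_succ_le_two_pow hk
  have hexp : c / ρ * (2 * (κ * c)) + 2 ≤ c ^ 2 / 64 := by
    have h1 : ρ * (c / ρ) ≤ c := Nat.mul_div_le c ρ
    have h2 : 128 * (c / ρ * (2 * (κ * c))) ≤ c ^ 2 := by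
      calc 128 * (c / ρ * (2 * (κ * c))) = ρ * (c / ρ) * c := by rw [hρ]; ring
        _ ≤ c * c := Nat.mul_le_mul_right _ h1
        _ = c ^ 2 := by ring
    have h3 : 32 * 32 ≤ c ^ 2 := by
      have : 32 ≤ c := le_trans (Nat.le_add_left _ _) hc
      nlinarith
    omega
  calc 4 * u.factorial ^ 2 ≤ 4 * (u ^ u) ^ 2 := by gcongr; exact Nat.factorial_le_pow u
    _ ≤ 4 * ((2 ^ (c / ρ)) ^ (κ * c)) ^ 2 :=
      Nat.mul_le_mul_left _ (Nat.pow_le_pow_left ((Nat.pow_le_pow_left hu2 u).trans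
        (Nat.pow_le_pow_right (by positivity) hu)) 2)
    _ = 2 ^ (c / ρ * (2 * (κ * c)) + 2) := by
      rw [← pow_mul, ← pow_mul, pow_add]
      ring_nf
    _ ≤ _ := Nat.pow_le_pow_right (by norm_num) hexp

/-- If every permutation outside `G` preserves few members of a family of multiplications, then
there are many pairwise non-isomorphic members all of whose automorphisms are in `G`. -/
lemma exists_pairwise_nonisomorphic {S U : Type*} [Fintype S] [Fintype U] (op : S → U → U → U)
    (hop : Function.Injective op) (G : Equiv.Perm U → Prop) {L K : ℕ}
    (hE : ∀ g, ¬G g →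
      (univ.filter fun s => IsMulHom (op s) (op s) g).card * 2 ^ L ≤ Fintype.card S)
    (hL : 4 * (Fintype.card U).factorial ^ 2 ≤ 2 ^ L) (hS : 2 ^ L ≤ Fintype.card S)
    (hK : K ≤ (Fintype.card U).factorial) :
    ∃ F : Fin K → S, (∀ i (g : Equiv.Perm U), IsMulHom (op (F i)) (op (F i)) g → G g) ∧
      ∀ i j, i ≠ j → ¬∃ e : Equiv.Perm U, IsMulHom (op (F i)) (op (F j)) e := by
  set N := Fintype.card S
  set w := (Fintype.card U).factorial
  have hw : 0 < w := Nat.factorial_pos _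
  let good : Finset S := univ.filter fun s => ∀ g : Equiv.Perm U, IsMulHom (op s) (op s) g → G g
  have hbad : goodᶜ.card * 2 ^ L ≤ w * N := by
    have hsub : goodᶜ ⊆ (univ.filter fun g => ¬G g).biUnion
        fun g => univ.filter fun s => IsMulHom (op s) (op s) g := by
      intro s hs
      simp only [good, mem_compl, mem_filter, mem_univ, true_and, not_forall] at hs
      obtain ⟨g, h1, h2⟩ := hs
      simp only [mem_biUnion, mem_filter, mem_univ, true_and]
      exact ⟨g, h2, h1⟩
    calc goodᶜ.card * 2 ^ L ≤ (∑ g ∈ univ.filter fun g => ¬G g,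
          (univ.filter fun s => IsMulHom (op s) (op s) g).card) * 2 ^ L :=
          Nat.mul_le_mul_right _ ((card_le_card hsub).trans card_biUnion_le)
      _ = ∑ g ∈ univ.filter fun g => ¬G g,
          (univ.filter fun s => IsMulHom (op s) (op s) g).card * 2 ^ L := sum_mul _ _ _
      _ ≤ ∑ _g ∈ univ.filter fun g => ¬G g, N :=
          sum_le_sum fun g hg => hE g (mem_filter.1 hg).2
      _ = (univ.filter fun g => ¬G g).card * N := by rw [sum_const, smul_eq_mul]
      _ ≤ w * N := Nat.mul_le_mul_right _ ((card_le_univ _).trans_eq (Fintype.card_perm))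
  have hgood : w * w ≤ good.card := by
    have h1 : goodᶜ.card * (4 * w) ≤ N := by
      refine Nat.le_of_mul_le_mul_left ?_ hw
      calc w * (goodᶜ.card * (4 * w)) = goodᶜ.card * (4 * w ^ 2) := by ring
        _ ≤ goodᶜ.card * 2 ^ L := Nat.mul_le_mul_left _ hL
        _ ≤ w * N := hbad
    have h2 : good.card + goodᶜ.card = N := card_add_card_compl good
    nlinarith
  let r : Setoid S :=
    { r := fun s t => ∃ e : Equiv.Perm U, IsMulHom (op s) (op t) e
      iseqv := ⟨fun s => ⟨1, fun _ _ => rfl⟩, fun ⟨e, he⟩ => ⟨e.symm, he.symm⟩,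
        fun ⟨e, he⟩ ⟨e', he'⟩ => ⟨e.trans e', fun x y => by simp [he x y, he' _ _]⟩⟩ }
  have hfib : ∀ a ∈ good.image (Quotient.mk r), (good.filter fun x => ⟦x⟧ = a).card ≤ w := by
    intro a ha
    obtain ⟨s₀, -, rfl⟩ := mem_image.1 ha
    have hex : ∀ x ∈ good.filter fun x => Quotient.mk r x = ⟦s₀⟧,
        ∃ e : Equiv.Perm U, IsMulHom (op s₀) (op x) e := fun x hx =>
      r.symm (Quotient.exact (mem_filter.1 hx).2)
    choose! e he using hex
    refine (card_le_card_of_injOn e (t := univ) (fun _ _ => mem_univ _) ?_).trans_eq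
      (by rw [card_univ, Fintype.card_perm])
    intro x hx y hy hxy
    apply hop
    funext a b
    have h1 := he x hx ((e x).symm a) ((e x).symm b)
    have h2 := he y hy ((e y).symm a) ((e y).symm b)
    rw [← hxy] at h2
    simp only [Equiv.apply_symm_apply] at h1 h2
    rw [← h1, ← h2]
  have hKle : K ≤ (good.image (Quotient.mk r)).card := by
    have := card_le_mul_card_image good w hfib
    exact hK.trans (Nat.le_of_mul_le_mul_left (hgood.trans this) hw)
  have hemb : Nonempty (Fin K ↪ good.image (Quotient.mk r)) :=
    Function.Embedding.nonempty_of_card_le (by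
      rwa [Fintype.card_fin, Fintype.card_coe])
  obtain ⟨j⟩ := hemb
  have hrep : ∀ i, ∃ s ∈ good, Quotient.mk r s = (j i).1 := fun i => mem_image.1 (j i).2
  choose F hF hFj using hrep
  refine ⟨F, fun i => (mem_filter.1 (hF i)).2, fun i k hik he => hik (j.injective ?_)⟩
  exact Subtype.ext (by rw [← hFj, ← hFj]; exact Quotient.sound he)

/-- The twelve states of a subsquare: a constant and two signs. -/
abbrev SquareState := ZMod 3 × ZMod 2 × ZMod 2

/-- The sign encoded by an element of `ZMod 2`. -/
def signOf (e : ZMod 2) : ZMod 3 := if e = 0 then 1 else -1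

/-- The symbol in row `i` and column `j` of the latin square of order three in state `σ`. -/
def cellSym (σ : SquareState) (i j : ZMod 3) : ZMod 3 :=
  σ.1 - signOf σ.2.1 * i - signOf σ.2.2 * j

/-- The column in which row `i` has the symbol `k`. -/
def cellCol (σ : SquareState) (i k : ZMod 3) : ZMod 3 :=
  signOf σ.2.2 * (σ.1 - signOf σ.2.1 * i - k)

/-- The row in which column `j` has the symbol `k`. -/
def cellRow (σ : SquareState) (j k : ZMod 3) : ZMod 3 :=
  signOf σ.2.1 * (σ.1 - signOf σ.2.2 * j - k)

lemma signOf_mul_self (e : ZMod 2) : signOf e * signOf e = 1 := by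
  revert e; decide

lemma cellCol_eq_iff {σ : SquareState} {i j k : ZMod 3} :
    cellCol σ i k = j ↔ cellSym σ i j = k := by
  have := signOf_mul_self σ.2.2
  unfold cellCol cellSym
  constructor
  · rintro rfl
    linear_combination (-(σ.1 - signOf σ.2.1 * i - k)) * this
  · rintro rfl
    linear_combination j * this

lemma cellRow_eq_iff {σ : SquareState} {i j k : ZMod 3} :
    cellRow σ j k = i ↔ cellSym σ i j = k := by
  have := signOf_mul_self σ.2.1
  unfold cellRow cellSym
  constructor
  · rintro rfl
    linear_combination (-(σ.1 - signOf σ.2.2 * j - k)) * this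
  · rintro rfl
    linear_combination i * this

lemma exists_cellSym_eq : ∀ i j k, ∃ σ, cellSym σ i j = k := by
  decide

lemma exists_cellSym_ne : ∀ i j k, ∃ σ, cellSym σ i j ≠ k := by
  decide

lemma exists_cellSym_eq_and_ne {i j k i' j' k' : ZMod 3} (h : ¬(i = i' ∧ j = j' ∧ k = k')) :
    ∃ σ, cellSym σ i j = k ∧ cellSym σ i' j' ≠ k' := by
  revert i j k i' j' k'
  decide +kernel

lemma cellSym_injective : ∀ σ τ, (∀ i j, cellSym σ i j = cellSym τ i j) → σ = τ := by
  decide +kernel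

section Latin

variable {B : Type*} [AddCommGroup B]

/-- The latin square of order `3 * |B|` whose subsquare at the site `(I, J)` is in state
`s (I, J)`: the symbol in row `a` and column `b`. -/
def latSym (s : B × B → SquareState) (a b : ZMod 3 × B) : ZMod 3 × B :=
  (cellSym (s (a.2, b.2)) a.1 b.1, -a.2 - b.2)

/-- The column in which row `a` has the symbol `z`. -/
def latCol (s : B × B → SquareState) (a z : ZMod 3 × B) : ZMod 3 × B :=
  (cellCol (s (a.2, -a.2 - z.2)) a.1 z.1, -a.2 - z.2)

/-- The row in which column `b` has the symbol `z`. -/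
def latRow (s : B × B → SquareState) (b z : ZMod 3 × B) : ZMod 3 × B :=
  (cellRow (s (-b.2 - z.2, b.2)) b.1 z.1, -b.2 - z.2)

lemma latSym_eq_iff {s : B × B → SquareState} {a b z : ZMod 3 × B} :
    latSym s a b = z ↔ z.2 = -a.2 - b.2 ∧ cellSym (s (a.2, b.2)) a.1 b.1 = z.1 := by
  rw [latSym, Prod.ext_iff]
  exact ⟨fun h => ⟨h.2.symm, h.1⟩, fun h => ⟨h.2, h.1.symm⟩⟩

lemma latCol_eq_iff {s : B × B → SquareState} {a b z : ZMod 3 × B} :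
    latCol s a z = b ↔ z.2 = -a.2 - b.2 ∧ cellSym (s (a.2, b.2)) a.1 b.1 = z.1 := by
  rw [latCol, Prod.ext_iff]
  constructor
  · rintro ⟨h1, h2⟩
    simp only at h1 h2
    rw [h2, cellCol_eq_iff] at h1
    exact ⟨by rw [← h2]; abel, h1⟩
  · rintro ⟨h1, h2⟩
    have h3 : -a.2 - z.2 = b.2 := by rw [h1]; abel
    simp only
    rw [h3, cellCol_eq_iff]
    exact ⟨h2, rfl⟩

lemma latRow_eq_iff {s : B × B → SquareState} {a b z : ZMod 3 × B} :
    latRow s b z = a ↔ z.2 = -a.2 - b.2 ∧ cellSym (s (a.2, b.2)) a.1 b.1 = z.1 := by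
  rw [latRow, Prod.ext_iff]
  constructor
  · rintro ⟨h1, h2⟩
    simp only at h1 h2
    rw [h2, cellRow_eq_iff] at h1
    exact ⟨by rw [← h2]; abel, h1⟩
  · rintro ⟨h1, h2⟩
    have h3 : -b.2 - z.2 = a.2 := by rw [h1]; abel
    simp only
    rw [h3, cellRow_eq_iff]
    exact ⟨h2, rfl⟩

lemma latCol_latSym (s : B × B → SquareState) (a b : ZMod 3 × B) :
    latCol s a (latSym s a b) = b := latCol_eq_iff.2 (latSym_eq_iff.1 rfl)

lemma latRow_latSym (s : B × B → SquareState) (a b : ZMod 3 × B) :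
    latRow s b (latSym s a b) = a := latRow_eq_iff.2 (latSym_eq_iff.1 rfl)

lemma latSym_latCol (s : B × B → SquareState) (a z : ZMod 3 × B) :
    latSym s a (latCol s a z) = z := latSym_eq_iff.2 (latCol_eq_iff.1 rfl)

lemma latRow_latCol (s : B × B → SquareState) (a z : ZMod 3 × B) :
    latRow s (latCol s a z) z = a := latRow_eq_iff.2 (latCol_eq_iff.1 rfl)

lemma latSym_latRow (s : B × B → SquareState) (b z : ZMod 3 × B) :
    latSym s (latRow s b z) b = z := latSym_eq_iff.2 (latRow_eq_iff.1 rfl)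

lemma latCol_latRow (s : B × B → SquareState) (b z : ZMod 3 × B) :
    latCol s (latRow s b z) z = b := latCol_eq_iff.2 (latRow_eq_iff.1 rfl)

end Latin

section Construction

variable {V X B : Type*} [AddCommGroup B]

/-- The points outside the common hole: a copy of `ZMod 3 × B` over every point of the doubled
system `Option (V × Bool)`. -/
abbrev OuterPoint (V B : Type*) := Σ _ : Option (V × Bool), ZMod 3 × B

/-- The point set of the construction. -/
abbrev BigPoint (V X B : Type*) := X ⊕ OuterPoint V B

/-- A symbol of the latin squares. -/
def symPt (z : ZMod 3 × B) : BigPoint V X B := .inr ⟨none, z⟩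

/-- A row of the latin square belonging to `v`. -/
def rowPt (v : V) (a : ZMod 3 × B) : BigPoint V X B := .inr ⟨some (v, false), a⟩

/-- A column of the latin square belonging to `v`. -/
def colPt (v : V) (b : ZMod 3 × B) : BigPoint V X B := .inr ⟨some (v, true), b⟩

/-- Multiplication of points over different points of the doubled system. -/
def crossOp (mV : V → V → V) (s : B × B → SquareState) : OuterPoint V B → OuterPoint V B →
    OuterPoint V B
  | ⟨none, z⟩, ⟨none, _⟩ => ⟨none, z⟩
  | ⟨none, z⟩, ⟨some (v, false), a⟩ => ⟨some (v, true), latCol s a z⟩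
  | ⟨none, z⟩, ⟨some (v, true), b⟩ => ⟨some (v, false), latRow s b z⟩
  | ⟨some (v, false), a⟩, ⟨none, z⟩ => ⟨some (v, true), latCol s a z⟩
  | ⟨some (v, true), b⟩, ⟨none, z⟩ => ⟨some (v, false), latRow s b z⟩
  | ⟨some (v, e), a⟩, ⟨some (w, f), b⟩ =>
    if v = w then ⟨none, bif e then latSym s b a else latSym s a b⟩
    else ⟨some (mV v w, xor e f), -a - b⟩

/-- The multiplication of the construction. -/
def bigOp (mV : V → V → V) (mX : X → X → X) (fill : X ⊕ (ZMod 3 × B) → X ⊕ (ZMod 3 × B) →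
    X ⊕ (ZMod 3 × B)) (s : B × B → SquareState) : BigPoint V X B → BigPoint V X B →
    BigPoint V X B :=
  fillOp mX (fun _ => fill) (crossOp mV s)

variable {mV : V → V → V} {mX : X → X → X} {fill : X ⊕ (ZMod 3 × B) → X ⊕ (ZMod 3 × B) →
    X ⊕ (ZMod 3 × B)} {s : B × B → SquareState}

lemma isSquag_bigOp (hV : IsSquag mV) (hfill : IsSquag fill)
    (hX : ∀ x y, fill (.inl x) (.inl y) = .inl (mX x y)) : IsSquag (bigOp mV mX fill s) := by
  refine isSquag_fillOp (fun _ => hX) (fun _ => hfill) ?_ ?_ ?_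
  · rintro ⟨_ | ⟨v, e⟩, a⟩ ⟨_ | ⟨w, f⟩, b⟩ h
    · exact absurd rfl h
    · cases f <;> rfl
    · cases e <;> rfl
    · by_cases hvw : v = w
      · subst hvw
        cases e <;> cases f <;> simp_all [crossOp]
      · simp [crossOp, hvw, Ne.symm hvw, hV.comm v w, Bool.xor_comm e f, sub_eq_add_neg, add_comm]
  · rintro ⟨_ | ⟨v, e⟩, a⟩ ⟨_ | ⟨w, f⟩, b⟩ h
    · exact absurd rfl h
    · cases f <;> simp [crossOp]
    · cases e <;> simp [crossOp]
    · by_cases hvw : v = w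
      · simp [crossOp, hvw]
      · simp [crossOp, hvw, (hV.ne_left hvw).symm]
  · rintro ⟨_ | ⟨v, e⟩, a⟩ ⟨_ | ⟨w, f⟩, b⟩ h
    · exact absurd rfl h
    · cases f <;> simp [crossOp, latRow_latCol, latCol_latRow]
    · cases e <;> simp [crossOp, latSym_latCol, latSym_latRow]
    · by_cases hvw : v = w
      · subst hvw
        cases e <;> cases f <;> simp_all [crossOp, latCol_latSym, latRow_latSym]
      · simp [crossOp, hvw, (hV.ne_left hvw).symm, hV.inv]

end Construction

section Points

variable {V X B : Type*}

lemma symPt_injective : Function.Injective (symPt : ZMod 3 × B → BigPoint V X B) := by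
  intro a b h
  simpa [symPt] using h

lemma rowPt_inj {v w : V} {a b : ZMod 3 × B} :
    (rowPt v a : BigPoint V X B) = rowPt w b ↔ v = w ∧ a = b := by
  simp [rowPt]

lemma colPt_inj {v w : V} {a b : ZMod 3 × B} :
    (colPt v a : BigPoint V X B) = colPt w b ↔ v = w ∧ a = b := by
  simp [colPt]

lemma rowPt_ne_colPt {v w : V} {a b : ZMod 3 × B} :
    (rowPt v a : BigPoint V X B) ≠ colPt w b := by
  simp [rowPt, colPt]

lemma rowPt_ne_symPt {v : V} {a b : ZMod 3 × B} : (rowPt v a : BigPoint V X B) ≠ symPt b := by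
  simp [rowPt, symPt]

lemma colPt_ne_symPt {v : V} {a b : ZMod 3 × B} : (colPt v a : BigPoint V X B) ≠ symPt b := by
  simp [colPt, symPt]

end Points

section Products

variable {V X B : Type*} [AddCommGroup B] {mV : V → V → V} {mX : X → X → X}
  {fill : X ⊕ (ZMod 3 × B) → X ⊕ (ZMod 3 × B) → X ⊕ (ZMod 3 × B)} {s : B × B → SquareState}

lemma bigOp_rowPt_colPt (v : V) (a b : ZMod 3 × B) :
    bigOp mV mX fill s (rowPt v a) (colPt v b) = symPt (latSym s a b) := by
  rw [bigOp, rowPt, colPt, fillOp_cross (by simp)]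
  simp [crossOp, symPt]

lemma bigOp_rowPt_symPt (v : V) (a z : ZMod 3 × B) :
    bigOp mV mX fill s (rowPt v a) (symPt z) = colPt v (latCol s a z) := by
  rw [bigOp, rowPt, symPt, fillOp_cross (by simp)]
  rfl

lemma bigOp_colPt_symPt (v : V) (b z : ZMod 3 × B) :
    bigOp mV mX fill s (colPt v b) (symPt z) = rowPt v (latRow s b z) := by
  rw [bigOp, colPt, symPt, fillOp_cross (by simp)]
  rfl

lemma bigOp_rowPt_rowPt {v w : V} (hvw : v ≠ w) (a b : ZMod 3 × B) :
    bigOp mV mX fill s (rowPt v a) (rowPt w b) = rowPt (mV v w) (-a - b) := by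
  rw [bigOp, rowPt, rowPt, fillOp_cross (by simpa using hvw)]
  simp [crossOp, rowPt, hvw]

lemma exists_symPt_mul (hfill : IsSquag fill)
    (hX : ∀ x y, fill (.inl x) (.inl y) = .inl (mX x y)) (x : X) :
    ∃ a b, bigOp mV mX fill s (symPt a) (symPt b) = .inl x := by
  obtain ⟨b, hb⟩ : ∃ b, fill (.inr 0) (.inl x) = .inr b := by
    rcases h : fill (.inr 0) (.inl x) with y | b
    · rw [hfill.comm, hfill.eq_comm_right, hX] at h
      exact absurd h (by simp)
    · exact ⟨b, rfl⟩
  refine ⟨0, b, ?_⟩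
  rw [hfill.eq_comm_right] at hb
  have := fillOp_lift (c := crossOp mV s) (fun _ : Option (V × Bool) => hX) none (.inr 0) (.inr b)
  rw [hb] at this
  exact this

/-- The three points of a triple of a latin square. -/
def sqTriple (v : V) (S : B × B) (i j k : ZMod 3) : Set (BigPoint V X B) :=
  {rowPt v (i, S.1), colPt v (j, S.2), symPt (k, -S.1 - S.2)}

/-- The condition `E` on the state function is either constant, or says that a particular triple
of a latin square, consisting of the points in `Y`, is present. -/
def IsSiteCondition (Y : Set (BigPoint V X B)) (E : (B × B → SquareState) → Prop) : Prop :=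
  (∀ s s', E s ↔ E s') ∨
    ∃ v S i j k, Y = sqTriple v S i j k ∧ ∀ s, E s ↔ cellSym (s S) i j = k

lemma isSiteCondition_of_latSym {Y : Set (BigPoint V X B)} {E : (B × B → SquareState) → Prop}
    {v : V} {a b z : ZMod 3 × B} (hY : Y = {rowPt v a, colPt v b, symPt z})
    (hE : ∀ s, E s ↔ latSym s a b = z) : IsSiteCondition Y E := by
  simp only [latSym_eq_iff] at hE
  by_cases h : z.2 = -a.2 - b.2
  · refine Or.inr ⟨v, (a.2, b.2), a.1, b.1, z.1, ?_, fun s => by simp [hE, h]⟩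
    rw [hY, sqTriple, ← h]
  · exact Or.inl fun s s' => by simp [hE, h]

lemma isSiteCondition_mul (P Q T : BigPoint V X B) :
    IsSiteCondition {P, Q, T} fun s => bigOp mV mX fill s P Q = T := by
  have aux : ∀ (pt : ZMod 3 × B → BigPoint V X B), Function.Injective pt →
      ∀ F : (B × B → SquareState) → ZMod 3 × B, (∀ s, bigOp mV mX fill s P Q = pt (F s)) →
      (∀ a, T = pt a → IsSiteCondition {P, Q, T} fun s => F s = a) →
      IsSiteCondition {P, Q, T} fun s => bigOp mV mX fill s P Q = T := by
    intro pt hpt F hF h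
    by_cases hT : ∃ a, T = pt a
    · obtain ⟨a, ha⟩ := hT
      convert h a ha using 3 with s
      rw [hF, ha, hpt.eq_iff]
    · exact Or.inl fun s s' => by
        simp only [hF]
        exact ⟨fun e => absurd ⟨_, e.symm⟩ hT, fun e => absurd ⟨_, e.symm⟩ hT⟩
  have comm : ∀ s, ∀ {p q : OuterPoint V B}, p.1 ≠ q.1 →
      bigOp mV mX fill s (.inr p) (.inr q) = .inr (crossOp mV s p q) := fun s _ _ h =>
    fillOp_cross h
  rcases P with x | ⟨d, a⟩
  · rcases Q with y | ⟨d', b⟩ <;> exact Or.inl fun s s' => Iff.rfl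
  rcases Q with y | ⟨d', b⟩
  · exact Or.inl fun s s' => Iff.rfl
  by_cases hd : d = d'
  · refine Or.inl fun s s' => ?_
    simp [bigOp, fillOp, hd]
  have hs := fun s => comm s (p := ⟨d, a⟩) (q := ⟨d', b⟩) hd
  have hrow : ∀ v : V, Function.Injective (rowPt v : ZMod 3 × B → BigPoint V X B) :=
    fun v _ _ h => (rowPt_inj.1 h).2
  have hcol : ∀ v : V, Function.Injective (colPt v : ZMod 3 × B → BigPoint V X B) :=
    fun v _ _ h => (colPt_inj.1 h).2
  have perm : ∀ x y z : BigPoint V X B, ({x, y, z} : Set (BigPoint V X B)) = {y, x, z} ∧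
      ({x, y, z} : Set (BigPoint V X B)) = {x, z, y} := fun x y z =>
    ⟨Set.insert_comm _ _ _, by rw [Set.pair_comm]⟩
  rcases d with _ | ⟨v, e⟩ <;> rcases d' with _ | ⟨w, f⟩
  · exact absurd rfl hd
  · cases f
    · refine aux (colPt w) (hcol w) (fun s => latCol s b a) hs fun c hc =>
        isSiteCondition_of_latSym (v := w) (a := b) (b := c) (z := a) ?_ fun s => ?_
      · rw [hc, (perm _ _ _).1, (perm _ _ _).2]
        rfl
      · rw [latCol_eq_iff, latSym_eq_iff]
    · refine aux (rowPt w) (hrow w) (fun s => latRow s b a) hs fun c hc =>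
        isSiteCondition_of_latSym (v := w) (a := c) (b := b) (z := a) ?_ fun s => ?_
      · rw [hc, (perm _ _ _).2, (perm _ _ _).1, (perm _ _ _).2]
        rfl
      · rw [latRow_eq_iff, latSym_eq_iff]
  · cases e
    · refine aux (colPt v) (hcol v) (fun s => latCol s a b) hs fun c hc =>
        isSiteCondition_of_latSym (v := v) (a := a) (b := c) (z := b) ?_ fun s => ?_
      · rw [hc, (perm _ _ _).2]
        rfl
      · rw [latCol_eq_iff, latSym_eq_iff]
    · refine aux (rowPt v) (hrow v) (fun s => latRow s a b) hs fun c hc =>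
        isSiteCondition_of_latSym (v := v) (a := c) (b := a) (z := b) ?_ fun s => ?_
      · rw [hc, (perm _ _ _).2, (perm _ _ _).1]
        rfl
      · rw [latRow_eq_iff, latSym_eq_iff]
  · by_cases hvw : v = w
    · subst hvw
      cases e <;> cases f
      · exact absurd rfl hd
      · refine aux symPt symPt_injective (fun s => latSym s a b)
          (fun s => by rw [hs]; simp [crossOp, symPt]) fun c hc =>
          isSiteCondition_of_latSym (v := v) (a := a) (b := b) (z := c) ?_ fun s => Iff.rfl
        rw [hc]
        rfl
      · refine aux symPt symPt_injective (fun s => latSym s b a)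
          (fun s => by rw [hs]; simp [crossOp, symPt]) fun c hc =>
          isSiteCondition_of_latSym (v := v) (a := b) (b := a) (z := c) ?_ fun s => Iff.rfl
        rw [hc, (perm _ _ _).1]
        rfl
      · exact absurd rfl hd
    · refine Or.inl fun s s' => ?_
      simp [hs, crossOp, hvw]

end Products

section Lift

variable {V X B : Type*}

/-- The permutation of the points of the construction induced by a permutation of `V`. -/
def liftPerm (h : Equiv.Perm V) : Equiv.Perm (BigPoint V X B) where
  toFun := Sum.map id fun p => ⟨p.1.map (Prod.map h id), p.2⟩
  invFun := Sum.map id fun p => ⟨p.1.map (Prod.map h.symm id), p.2⟩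
  left_inv := by
    rintro (x | ⟨_ | ⟨v, e⟩, a⟩) <;> simp
  right_inv := by
    rintro (x | ⟨_ | ⟨v, e⟩, a⟩) <;> simp

lemma liftPerm_rowPt (h : Equiv.Perm V) (v : V) (a : ZMod 3 × B) :
    liftPerm h (rowPt v a : BigPoint V X B) = rowPt (h v) a := rfl

end Lift

section Sites

variable {V X B : Type*} [AddCommGroup B] {mV : V → V → V} {mX : X → X → X}
  {fill : X ⊕ (ZMod 3 × B) → X ⊕ (ZMod 3 × B) → X ⊕ (ZMod 3 × B)} {s : B × B → SquareState}

/-- The permutation `g` maps every conceivable triple at the site `S` to the corresponding triple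
at `S` of some latin square. -/
def IsFixedSite (g : Equiv.Perm (BigPoint V X B)) (S : B × B) : Prop :=
  ∀ v i j k, ∃ v', g '' sqTriple v S i j k = sqTriple v' S i j k

/-- At a site that is not fixed, one value of the state function is excluded by another one (or
absolutely) for the state functions preserved by `g`. -/
lemma exists_avoid_of_not_isFixedSite {g : Equiv.Perm (BigPoint V X B)} {S : B × B}
    (hS : ¬IsFixedSite g S) : ∃ (S' : B × B) (h : SquareState → SquareState),
      (S' = S → ∀ a b, h a = h b) ∧
      ∀ s, IsMulHom (bigOp mV mX fill s) (bigOp mV mX fill s) g → s S ≠ h (s S') := by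
  simp only [IsFixedSite, not_forall, not_exists] at hS
  obtain ⟨v, i, j, k, hS⟩ := hS
  have key : ∀ s, IsMulHom (bigOp mV mX fill s) (bigOp mV mX fill s) g →
      (cellSym (s S) i j = k ↔ bigOp mV mX fill s (g (rowPt v (i, S.1))) (g (colPt v (j, S.2))) =
        g (symPt (k, -S.1 - S.2))) := by
    intro s hs
    rw [← hs, g.injective.eq_iff, bigOp_rowPt_colPt, symPt_injective.eq_iff, latSym_eq_iff]
    simp
  have himg : g '' sqTriple v S i j k =
      {g (rowPt v (i, S.1)), g (colPt v (j, S.2)), g (symPt (k, -S.1 - S.2))} := by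
    simp [sqTriple, Set.image_insert_eq]
  rcases isSiteCondition_mul (mV := mV) (mX := mX) (fill := fill) (g (rowPt v (i, S.1)))
    (g (colPt v (j, S.2))) (g (symPt (k, -S.1 - S.2))) with h | ⟨v', S', i', j', k', hY, h⟩
  · by_cases h0 : bigOp mV mX fill (fun _ => 0) (g (rowPt v (i, S.1))) (g (colPt v (j, S.2))) =
        g (symPt (k, -S.1 - S.2))
    · obtain ⟨σ, hσ⟩ := exists_cellSym_ne i j k
      refine ⟨S, fun _ => σ, fun _ _ _ => rfl, fun s hs e => hσ ?_⟩
      rw [← show s S = σ from e, key s hs]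
      exact (h s _).2 h0
    · obtain ⟨σ, hσ⟩ := exists_cellSym_eq i j k
      refine ⟨S, fun _ => σ, fun _ _ _ => rfl, fun s hs e => h0 ?_⟩
      rw [← show s S = σ from e, key s hs] at hσ
      exact (h s _).1 hσ
  · by_cases hSS : S' = S
    · subst hSS
      obtain ⟨σ, hσ, hσ'⟩ := exists_cellSym_eq_and_ne (i := i) (j := j) (k := k) (i' := i')
        (j' := j') (k' := k') (by
          rintro ⟨rfl, rfl, rfl⟩
          exact hS v' (himg.trans hY))
      refine ⟨S', fun _ => σ, fun _ _ _ => rfl, fun s hs e => hσ' ?_⟩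
      rw [← show s S' = σ from e, key s hs] at hσ
      rw [← show s S' = σ from e]
      exact (h s).1 hσ
    · obtain ⟨σ, hσ⟩ := exists_cellSym_ne i j k
      obtain ⟨τ, hτ⟩ := exists_cellSym_eq i j k
      refine ⟨S', fun ρ => if cellSym ρ i' j' = k' then σ else τ, fun e => absurd e hSS,
        fun s hs e => ?_⟩
      have h1 := (key s hs).trans (h s)
      beta_reduce at e
      by_cases h2 : cellSym (s S') i' j' = k'
      · rw [if_pos h2] at e
        exact hσ (e ▸ h1.2 h2)
      · rw [if_neg h2] at e
        rw [← e] at hτ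
        exact h2 (h1.1 hτ)

lemma IsFixedSite.apply_symPt [Nonempty V] {g : Equiv.Perm (BigPoint V X B)} {S : B × B}
    (h : IsFixedSite g S) (k : ZMod 3) :
    g (symPt (k, -S.1 - S.2)) = symPt (k, -S.1 - S.2) := by
  have hmem : ∀ i j, ∃ v', g (symPt (k, -S.1 - S.2)) ∈ sqTriple v' S i j k := fun i j => by
    obtain ⟨v', hv'⟩ := h (Classical.arbitrary V) i j k
    exact ⟨v', hv' ▸ Set.mem_image_of_mem g (by simp [sqTriple])⟩
  obtain ⟨v, hv⟩ := hmem 0 0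
  obtain ⟨w, hw⟩ := hmem 1 1
  simp only [sqTriple, Set.mem_insert_iff, Set.mem_singleton_iff] at hv hw
  rcases hv with hv | hv | hv
  · rw [hv, rowPt_inj] at hw
    simp [rowPt_ne_colPt, rowPt_ne_symPt] at hw
  · rw [hv, colPt_inj] at hw
    simp [rowPt_ne_colPt.symm, colPt_ne_symPt] at hw
  · exact hv

lemma IsFixedSite.apply_rowPt_colPt {g : Equiv.Perm (BigPoint V X B)} {S : B × B}
    (h : IsFixedSite g S) (v : V) (i j : ZMod 3) : ∃ v', g (rowPt v (i, S.1)) = rowPt v' (i, S.1) ∧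
      g (colPt v (j, S.2)) = colPt v' (j, S.2) := by
  obtain ⟨v', h0⟩ := h v i j 0
  obtain ⟨v₁, h1⟩ := h v i (j + 1) 1
  obtain ⟨v₂, h2⟩ := h v (i + 1) j 1
  have m0 := h0 ▸ Set.mem_image_of_mem g (show rowPt v (i, S.1) ∈ sqTriple v S i j 0 by
    simp [sqTriple])
  have m1 := h1 ▸ Set.mem_image_of_mem g (show rowPt v (i, S.1) ∈ sqTriple v S i (j + 1) 1 by
    simp [sqTriple])
  have n0 := h0 ▸ Set.mem_image_of_mem g (show colPt v (j, S.2) ∈ sqTriple v S i j 0 by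
    simp [sqTriple])
  have n2 := h2 ▸ Set.mem_image_of_mem g (show colPt v (j, S.2) ∈ sqTriple v S (i + 1) j 1 by
    simp [sqTriple])
  simp only [sqTriple, Set.mem_insert_iff, Set.mem_singleton_iff] at m0 m1 n0 n2
  refine ⟨v', ?_, ?_⟩
  · rcases m0 with e | e | e
    · exact e
    · rw [e, colPt_inj] at m1
      simp [rowPt_ne_colPt.symm, colPt_ne_symPt] at m1
    · rw [e, symPt_injective.eq_iff] at m1
      simp [rowPt_ne_symPt.symm, colPt_ne_symPt.symm] at m1
  · rcases n0 with e | e | e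
    · rw [e, rowPt_inj] at n2
      simp [rowPt_ne_colPt, rowPt_ne_symPt] at n2
    · exact e
    · rw [e, symPt_injective.eq_iff] at n2
      simp [rowPt_ne_symPt.symm, colPt_ne_symPt.symm] at n2

lemma isMulHom_liftPerm (hX : ∀ x y, fill (.inl x) (.inl y) = .inl (mX x y)) {h : Equiv.Perm V}
    (hh : IsMulHom mV mV h) :
    IsMulHom (bigOp mV mX fill s) (bigOp mV mX fill s) (liftPerm h) := by
  have hlift : ∀ (d : Option (V × Bool)) (p : X ⊕ (ZMod 3 × B)),
      liftPerm h (liftFlat (K := fun _ => ZMod 3 × B) d p) =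
        liftFlat (K := fun _ => ZMod 3 × B) (d.map (Prod.map h id)) p := by
    rintro d (x | a) <;> rfl
  have hfst : ∀ d d' : Option (V × Bool), d ≠ d' →
      d.map (Prod.map h id) ≠ d'.map (Prod.map h id) := fun d d' hd e =>
    hd (Option.map_injective (h.injective.prodMap Function.injective_id) e)
  intro P Q
  rcases flat_or_cross P Q with ⟨d, p, q, rfl, rfl⟩ | ⟨p, q, rfl, rfl, hpq⟩
  · rw [hlift, hlift, bigOp, fillOp_lift (fun _ => hX), fillOp_lift (fun _ => hX), hlift]
  · have e1 := fillOp_cross (mX := mX) (fill := fun _ => fill) (c := crossOp mV s) hpq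
    have e2 := fillOp_cross (mX := mX) (fill := fun _ => fill) (c := crossOp mV s)
      (p := ⟨p.1.map (Prod.map h id), p.2⟩) (q := ⟨q.1.map (Prod.map h id), q.2⟩)
      (hfst _ _ hpq)
    rw [bigOp, e1]
    refine Eq.trans ?_ e2.symm
    obtain ⟨d, a⟩ := p
    obtain ⟨d', b⟩ := q
    rcases d with _ | ⟨v, e⟩ <;> rcases d' with _ | ⟨w, f⟩
    · exact absurd rfl hpq
    · cases f <;> rfl
    · cases e <;> rfl
    · by_cases hvw : v = w
      · simp [crossOp, hvw, liftPerm]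
      · simp [crossOp, hvw, liftPerm, hh v w]

end Sites

/-- There is a row block in which more than half of the sites are fixed. -/
lemma exists_card_filter_lt {B : Type*} [Fintype B] {p : B × B → Prop}
    (hp : 2 * (univ.filter fun S => ¬p S).card < Fintype.card B ^ 2) :
    ∃ I, 2 * (univ.filter fun J => ¬p (I, J)).card < Fintype.card B := by
  by_contra! h
  have hsum : (univ.filter fun S => ¬p S).card = ∑ I : B, (univ.filter fun J => ¬p (I, J)).card := by
    simp only [card_filter, Fintype.sum_prod_type]
  have := Finset.sum_le_sum fun I (_ : I ∈ (univ : Finset B)) => h I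
  rw [← mul_sum, ← hsum, sum_const, card_univ, smul_eq_mul] at this
  nlinarith

section Automorphisms

variable {V X B : Type*} [AddCommGroup B] {mV : V → V → V} {mX : X → X → X}
  {fill : X ⊕ (ZMod 3 × B) → X ⊕ (ZMod 3 × B) → X ⊕ (ZMod 3 × B)} {s : B × B → SquareState}

/-- If all automorphisms come from `V`, then `V` is a full subsystem. -/
lemma isFullSub_rowPt (hV : IsSquag mV) (hfill : IsSquag fill)
    (hX : ∀ x y, fill (.inl x) (.inl y) = .inl (mX x y))
    (hs : ∀ g : Equiv.Perm (BigPoint V X B), IsMulHom (bigOp mV mX fill s) (bigOp mV mX fill s) g →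
      ∃ h : Equiv.Perm V, IsMulHom mV mV h ∧ g = liftPerm h) :
    IsFullSub mV (bigOp mV mX fill s) fun v => rowPt v 0 := by
  have hinj : Function.Injective fun v => (rowPt v 0 : BigPoint V X B) :=
    fun v w h => (rowPt_inj.1 h).1
  refine ⟨hinj, ?_, ?_, ?_⟩
  · intro v w
    by_cases hvw : v = w
    · simp [hvw, hV.idem, (isSquag_bigOp hV hfill hX).idem]
    · simp [bigOp_rowPt_rowPt hvw]
  · intro g hg
    obtain ⟨h, hh, rfl⟩ := hs g hg
    exact ⟨h, hh, fun v => liftPerm_rowPt h v 0⟩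
  · intro h hh
    refine ⟨liftPerm h, ⟨isMulHom_liftPerm hX hh, fun v => liftPerm_rowPt h v 0⟩, ?_⟩
    rintro g ⟨hg, hgv⟩
    obtain ⟨h', hh', rfl⟩ := hs g hg
    congr 1
    ext v
    exact hinj ((liftPerm_rowPt h' v 0).symm.trans (hgv v))

lemma bigOp_injective [Nonempty V] : Function.Injective (bigOp mV mX fill) := by
  intro s s' h
  funext S
  refine cellSym_injective _ _ fun i j => ?_
  have v := Classical.arbitrary V
  have e := bigOp_rowPt_colPt (mV := mV) (mX := mX) (fill := fill) (s := s) v (i, S.1) (j, S.2)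
  rw [h, bigOp_rowPt_colPt, symPt_injective.eq_iff] at e
  exact (congrArg Prod.fst e).symm

variable [Fintype B]

/-- Few state functions are preserved by a permutation with many sites that are not fixed. -/
lemma card_isMulHom_mul_two_pow_le {g : Equiv.Perm (BigPoint V X B)} {L : ℕ}
    (hL : 16 * L ≤ (univ.filter fun S : B × B => ¬IsFixedSite g S).card) :
    (univ.filter fun s : B × B → SquareState =>
      IsMulHom (bigOp mV mX fill s) (bigOp mV mX fill s) g).card * 2 ^ L ≤
        12 ^ Fintype.card (B × B) := by
  have key : ∀ S : B × B, ∃ (S' : B × B) (h : SquareState → SquareState), ¬IsFixedSite g S →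
      (S' = S → ∀ a b, h a = h b) ∧
      ∀ s, IsMulHom (bigOp mV mX fill s) (bigOp mV mX fill s) g → s S ≠ h (s S') := by
    intro S
    by_cases hS : IsFixedSite g S
    · exact ⟨S, id, fun h => absurd hS h⟩
    · obtain ⟨S', h, hh⟩ := exists_avoid_of_not_isFixedSite (mV := mV) (mX := mX) (fill := fill) hS
      exact ⟨S', h, fun _ => hh⟩
  choose f h hfh using key
  refine le_trans (Nat.mul_le_mul_right _ (card_le_card ?_))
    (card_avoid_mul_two_pow_le (by simp [SquareState]) _ f h ?_ hL)
  · intro s hs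
    simp only [mem_filter, mem_univ, true_and] at hs ⊢
    exact fun S hS => (hfh S hS).2 s hs
  · intro S hS
    exact (hfh S (mem_filter.1 hS).2).1

/-- A property holding for more than half of a group holds simultaneously at some element and its
translate. -/
lemma exists_and_add {q : B → Prop} (hq : 2 * (univ.filter fun J => ¬q J).card < Fintype.card B)
    (D : B) : ∃ J, q J ∧ q (D + J) := by
  by_contra! h
  have h1 : (univ.filter fun J => ¬q (D + J)).card = (univ.filter fun J => ¬q J).card :=
    card_bij (fun J _ => D + J) (by simp) (by simp) fun J hJ => ⟨-D + J, by simpa using hJ, by simp⟩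
  have h2 : (univ : Finset B) ⊆
      (univ.filter fun J => ¬q J) ∪ univ.filter fun J => ¬q (D + J) := by
    intro J _
    by_cases hJ : q J
    · exact mem_union_right _ (by simpa using h J hJ)
    · exact mem_union_left _ (by simpa using hJ)
  have h3 := (card_le_card h2).trans (card_union_le _ _)
  rw [card_univ, h1] at h3
  omega

/-- An automorphism of the construction fixing more than half of the sites is induced by an
automorphism of `V`. -/
lemma exists_eq_liftPerm [Nonempty V] [Finite V] (hV : IsSquag mV) (hfill : IsSquag fill)
    (hX : ∀ x y, fill (.inl x) (.inl y) = .inl (mX x y)) {g : Equiv.Perm (BigPoint V X B)}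
    (hg : IsMulHom (bigOp mV mX fill s) (bigOp mV mX fill s) g)
    (hcard : 2 * (univ.filter fun S : B × B => ¬IsFixedSite g S).card < Fintype.card B ^ 2) :
    ∃ h : Equiv.Perm V, IsMulHom mV mV h ∧ g = liftPerm h := by
  obtain ⟨I, hI⟩ := exists_card_filter_lt hcard
  have hex := exists_and_add (q := fun J => IsFixedSite g (I, J)) hI
  obtain ⟨J₀, hJ₀, -⟩ := hex 0
  choose γ hγ _ using fun v => hJ₀.apply_rowPt_colPt v 0 0
  have hcol : ∀ v j J, IsFixedSite g (I, J) → g (colPt v (j, J)) = colPt (γ v) (j, J) := by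
    intro v j J hJ
    obtain ⟨v', h1, h2⟩ := hJ.apply_rowPt_colPt v 0 j
    rw [hγ v, rowPt_inj] at h1
    rw [h2, h1.1]
  have hsymI : ∀ k J, IsFixedSite g (I, J) → g (symPt (k, -I - J)) = symPt (k, -I - J) :=
    fun k J hJ => hJ.apply_symPt k
  have hrow : ∀ v a, g (rowPt v a) = rowPt (γ v) a := by
    rintro v ⟨i, I'⟩
    obtain ⟨J, hJ, hJ'⟩ := hex (I' - I)
    have e : latSym s (i, I') (0, J) = ((latSym s (i, I') (0, J)).1, -I - (I' - I + J)) := by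
      simp only [latSym, Prod.mk.injEq, true_and]
      abel
    have e1 := bigOp_colPt_symPt (mV := mV) (mX := mX) (fill := fill) (s := s) v (0, J)
      (latSym s (i, I') (0, J))
    have e2 := bigOp_colPt_symPt (mV := mV) (mX := mX) (fill := fill) (s := s) (γ v) (0, J)
      (latSym s (i, I') (0, J))
    rw [latRow_latSym] at e1 e2
    rw [← e1, hg, hcol v 0 J hJ, e, hsymI _ _ hJ', ← e, e2]
  have hsym : ∀ z, g (symPt z) = symPt z := by
    intro z
    have v := Classical.arbitrary V
    have e : ∀ w, bigOp mV mX fill s (rowPt w (latRow s (0, J₀) z)) (colPt w (0, J₀)) = symPt z :=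
      fun w => by rw [bigOp_rowPt_colPt, latSym_latRow]
    rw [← e v, hg, hrow, hcol v 0 J₀ hJ₀, e, e]
  have hcol' : ∀ v b, g (colPt v b) = colPt (γ v) b := by
    intro v b
    have e : ∀ w, bigOp mV mX fill s (rowPt w 0) (symPt (latSym s 0 b)) = colPt w b :=
      fun w => by rw [bigOp_rowPt_symPt, latCol_latSym]
    rw [← e v, hg, hrow, hsym, e]
  have hinj : Function.Injective γ := by
    intro v w hvw
    have := g.injective ((hrow v 0).trans ((congrArg (rowPt · 0) hvw).trans (hrow w 0).symm))
    exact (rowPt_inj.1 this).1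
  refine ⟨Equiv.ofBijective γ (Finite.injective_iff_bijective.1 hinj), ?_, ?_⟩
  · intro v w
    by_cases hvw : v = w
    · simp [hvw, hV.idem]
    · have e := hg (rowPt v 0) (rowPt w 0)
      rw [bigOp_rowPt_rowPt hvw, hrow, hrow, hrow, bigOp_rowPt_rowPt (hinj.ne hvw), rowPt_inj] at e
      exact e.1
  · ext1 P
    rcases P with x | ⟨_ | ⟨v, _ | _⟩, a⟩
    · obtain ⟨a, b, e⟩ := exists_symPt_mul (mV := mV) (s := s) hfill hX x
      rw [← e, hg, hsym, hsym, e]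
      rfl
    · exact hsym a
    · exact hrow v a
    · exact hcol' v a

end Automorphisms

/-- There are `K` pairwise nonisomorphic Steiner quasigroups on `u` points that contain `V` as a
full subsystem. -/
def HasFullFamily {V : Type*} (mV : V → V → V) (u K : ℕ) : Prop :=
  ∃ op : Fin K → Fin u → Fin u → Fin u,
    (∀ i, IsSquag (op i) ∧ ∃ φ, IsFullSub mV (op i) φ) ∧
    ∀ i j, i ≠ j → ¬∃ e : Equiv.Perm (Fin u), IsMulHom (op i) (op j) e

lemma hasFullFamily_of_fill {V X B : Type*} [Nonempty V] [Fintype V] [Fintype X] [Fintype B]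
    [AddCommGroup B] {mV : V → V → V} {mX : X → X → X}
    {fill : X ⊕ (ZMod 3 × B) → X ⊕ (ZMod 3 × B) → X ⊕ (ZMod 3 × B)}
    (hV : IsSquag mV) (hfill : IsSquag fill)
    (hX : ∀ x y, fill (.inl x) (.inl y) = .inl (mX x y)) {u K : ℕ}
    (hu : Fintype.card (BigPoint V X B) = u)
    (hL : 4 * u.factorial ^ 2 ≤ 2 ^ (Fintype.card B ^ 2 / 64)) (hK : K ≤ u.factorial) :
    HasFullFamily mV u K := by
  have hcard : Fintype.card (B × B → SquareState) = 12 ^ Fintype.card (B × B) := by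
    simp [SquareState]
  obtain ⟨F, hF, hiso⟩ := exists_pairwise_nonisomorphic (bigOp mV mX fill) bigOp_injective
    (fun g => ∃ h : Equiv.Perm V, IsMulHom mV mV h ∧ g = liftPerm h)
    (L := Fintype.card B ^ 2 / 64) (K := K) (fun g hg => by
      by_cases hs : ∃ s, IsMulHom (bigOp mV mX fill s) (bigOp mV mX fill s) g
      · obtain ⟨s, hs⟩ := hs
        rw [hcard]
        refine card_isMulHom_mul_two_pow_le ?_
        by_contra! hlt
        exact hg (exists_eq_liftPerm hV hfill hX hs (by omega))
      · rw [filter_false_of_mem fun s _ h => hs ⟨s, h⟩]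
        simp)
    (hu ▸ hL) (by
      rw [hcard, Fintype.card_prod, ← sq]
      exact (Nat.pow_le_pow_left (by norm_num) _).trans
        (Nat.pow_le_pow_right (by norm_num) (Nat.div_le_self _ _)))
    (hu ▸ hK)
  have e := Fintype.equivFinOfCardEq hu
  refine ⟨fun i a b => e (bigOp mV mX fill (F i) (e.symm a) (e.symm b)), fun i =>
    ⟨(isSquag_bigOp hV hfill hX).transport e, _,
      (isFullSub_rowPt hV hfill hX (hF i)).transport e⟩, ?_⟩
  rintro i j hij ⟨k, hk⟩
  refine hiso i j hij ⟨e.trans (k.trans e.symm), fun x y => ?_⟩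
  have := hk (e x) (e y)
  simp only [Equiv.symm_apply_apply] at this
  simp [this]

lemma hasFullFamily_of_hasHoledSquag {V : Type*} [Nonempty V] [Fintype V] {mV : V → V → V}
    (hV : IsSquag mV) {x n u K : ℕ} (hn : 0 < n) (hx : HasHoledSquag x (6 * n))
    (hu : x + (2 * Fintype.card V + 1) * (6 * n) = u)
    (hL : 4 * u.factorial ^ 2 ≤ 2 ^ ((2 * n) ^ 2 / 64)) (hK : K ≤ u.factorial) :
    HasFullFamily mV u K := by
  have : NeZero (2 * n) := ⟨by omega⟩
  obtain ⟨m, mX, hm, hmX⟩ := hx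
  have hB : Fintype.card (ZMod 3 × ZMod (2 * n)) = 6 * n := by
    simp only [Fintype.card_prod, ZMod.card]
    ring
  let e : Fin x ⊕ Fin (6 * n) ≃ Fin x ⊕ (ZMod 3 × ZMod (2 * n)) :=
    Equiv.sumCongr (Equiv.refl _) (Fintype.equivFinOfCardEq hB).symm
  refine hasFullFamily_of_fill (B := ZMod (2 * n)) hV (hm.transport e) (mX := mX)
    (fun y z => ?_) ?_ (by rwa [ZMod.card]) hK
  · have h1 : ∀ y, e.symm (.inl y) = .inl y := fun _ => rfl
    rw [h1, h1, hmX]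
    rfl
  · rw [← hu]
    simp only [Fintype.card_sum, Fintype.card_fin, Fintype.card_sigma, hB, sum_const, card_univ,
      Fintype.card_option, Fintype.card_prod, Fintype.card_bool, smul_eq_mul]
    ring

lemma exists_hasFullFamily_of_nonempty {V : Type*} [Nonempty V] [Fintype V] {mV : V → V → V}
    (hV : IsSquag mV) : ∃ N : ℕ, ∀ u, N ≤ u → u % 6 = 1 ∨ u % 6 = 3 → ∀ K ≤ u.factorial,
      HasFullFamily mV u K := by
  set Q := 2 * Fintype.card V + 1 with hQ
  have hx : ∀ r, ∃ x, r % 6 = 1 ∨ r % 6 = 3 → Odd x ∧ HasSquag x ∧ x ≡ r [MOD 36 * Q] := by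
    intro r
    by_cases hr : r % 6 = 1 ∨ r % 6 = 3
    · obtain ⟨x, hx⟩ := exists_hasSquag_modEq Q r (by omega) hr
      exact ⟨x, fun _ => hx⟩
    · exact ⟨0, fun h => absurd h hr⟩
  choose x hx using hx
  obtain ⟨c₀, hc₀⟩ := exists_factorial_sq_le (3 * Q + 2) (by omega)
  set M := (range (36 * Q)).sup x
  refine ⟨6 * Q + M + 36 * Q * (M + c₀), fun u hu hu6 K hK => ?_⟩
  set r := (u - 6 * Q) % (36 * Q)
  have hrlt : r < 36 * Q := Nat.mod_lt _ (by omega)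
  have hr6 : r % 6 = u % 6 := by
    rw [Nat.mod_mod_of_dvd _ (Dvd.intro (6 * Q) (by ring))]
    omega
  have hxM : x r ≤ M := le_sup (f := x) (mem_range.2 hrlt)
  obtain ⟨hodd, hsq, hmod⟩ := hx r (by rwa [hr6])
  have hmod' : x r ≡ u - 6 * Q [MOD 36 * Q] := hmod.trans (Nat.mod_modEq _ _)
  obtain ⟨j, hj⟩ := (Nat.modEq_iff_dvd' (by omega)).1 hmod'
  have hjM : M + c₀ ≤ j := by
    refine Nat.le_of_mul_le_mul_left (c := 36 * Q) ?_ (by omega)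
    omega
  have huj : x r + Q * (6 * (6 * j + 1)) = u := by
    have : Q * (6 * (6 * j + 1)) = 36 * Q * j + 6 * Q := by ring
    omega
  refine hasFullFamily_of_hasHoledSquag hV (by omega) (hsq.hasHoledSquag hodd (by omega)) huj
    (hc₀ _ (by omega) u ?_) hK
  rw [← huj]
  have : (3 * Q + 2) * (2 * (6 * j + 1)) = Q * (6 * (6 * j + 1)) + (24 * j + 4) := by ring
  omega

/-- A system with a full one-point subsystem is rigid. -/
lemma IsFullSub.of_isEmpty {V U : Type*} [IsEmpty V] (mV : V → V → V) {mU : U → U → U}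
    {φ : Unit → U} (h : IsFullSub (fun _ _ => ()) mU φ) :
    IsFullSub mV mU isEmptyElim := by
  obtain ⟨-, -, h1, h2⟩ := h
  refine ⟨fun v => isEmptyElim v, fun v => isEmptyElim v,
    fun g _ => ⟨1, fun v => isEmptyElim v, fun v => isEmptyElim v⟩, fun k _ => ?_⟩
  obtain ⟨g, hg, huniq⟩ := h2 1 fun _ _ => rfl
  refine ⟨g, ⟨hg.1, fun v => isEmptyElim v⟩, fun g' hg' => huniq g' ⟨hg'.1, fun _ => ?_⟩⟩
  obtain ⟨k', -, hk'⟩ := h1 g' hg'.1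
  exact hk' ()

lemma exists_hasFullFamily {V : Type*} [Fintype V] {mV : V → V → V}
    (hV : IsSquag mV) : ∃ N : ℕ, ∀ u, N ≤ u → u % 6 = 1 ∨ u % 6 = 3 → ∀ K ≤ u.factorial,
      HasFullFamily mV u K := by
  cases isEmpty_or_nonempty V
  · obtain ⟨N, hN⟩ := exists_hasFullFamily_of_nonempty (mV := fun _ _ : Unit => ())
      ⟨fun _ => rfl, fun _ _ => rfl, fun _ _ => rfl⟩
    refine ⟨N, fun u hu hu6 K hK => ?_⟩
    obtain ⟨op, h1, h2⟩ := hN u hu hu6 K hK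
    refine ⟨op, fun i => ⟨(h1 i).1, ?_⟩, h2⟩
    obtain ⟨φ, hφ⟩ := (h1 i).2
    exact ⟨_, hφ.of_isEmpty mV⟩
  · exact exists_hasFullFamily_of_nonempty hV

/-- **Remark 3.14.** If `V_*` is a Steiner triple system, then there is an integer
`N` such that, for `u ≥ N` and `u ≡ 1` or `3 (mod 6)`, there are at least
`⌊u / (2^145·|V_*|^25)⌋!` pairwise nonisomorphic Steiner triple systems on `u`
points, each having a subsystem isomorphic to `V_*` that is `Aut`-invariant, on
which the automorphism group induces `Aut V_*`, with `Aut U ≅ Aut V_*`. -/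
theorem stmt18 {α : Type*} [Fintype α] (TV : Finset (Finset α)) (hV : IsSTS TV) :
    ∃ N : ℕ, ∀ u : ℕ, N ≤ u → u % 6 = 1 ∨ u % 6 = 3 →
      ∃ F : Fin (Nat.factorial (u / (2 ^ 145 * Fintype.card α ^ 25))) →
          Finset (Finset (Fin u)),
        (∀ i, IsSTS (F i) ∧ ∃ φ : α → Fin u, FullEmbedding TV (F i) φ) ∧
        ∀ i j, i ≠ j →
          ¬∃ e : Equiv.Perm (Fin u), ∀ t : Finset (Fin u), t ∈ F i ↔ t.image e ∈ F j := by
  obtain ⟨mV, hmV, rfl⟩ := hV.exists_isSquag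
  obtain ⟨N, hN⟩ := exists_hasFullFamily hmV
  refine ⟨N, fun u hu hu6 => ?_⟩
  obtain ⟨op, h1, h2⟩ := hN u hu hu6 _ (Nat.factorial_le (Nat.div_le_self u _))
  refine ⟨fun i => triples (op i), fun i => ⟨(h1 i).1.isSTS_triples, ?_⟩, ?_⟩
  · obtain ⟨φ, hφ⟩ := (h1 i).2
    exact ⟨φ, hφ.fullEmbedding hmV (h1 i).1⟩
  · rintro i j hij ⟨e, he⟩
    refine h2 i j hij ⟨e, (isMulHom_iff_triples (h1 i).1 (h1 j).1 e).2 fun t => ?_⟩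
    convert he t

end
end

section
/- For every integer n ≥ 1: any two partial Steiner triple systems satisfying the defining conditions of Q(z) (for this n) are isomorphic, and every such PSTS has trivial automorphism group. -/
open Finset

noncomputable section
open scoped Classical

section QUniqueness

variable {β : Type*}

lemma IsPSTS.mono {C T : Finset (Finset β)} (hT : IsPSTS T) (h : C ⊆ T) : IsPSTS C :=
  ⟨fun t ht => hT.1 t (h ht), fun p q hpq t₁ h₁ t₂ h₂ => hT.2 p q hpq t₁ (h h₁) t₂ (h h₂)⟩

lemma IsPSTS.point_eq {T : Finset (Finset β)} (hT : IsPSTS T) {s t : Finset β} (hs : s ∈ T)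
    (ht : t ∈ T) (hst : s ≠ t) {p q : β} (hps : p ∈ s) (hpt : p ∈ t) (hqs : q ∈ s)
    (hqt : q ∈ t) : p = q := by
  by_contra hpq
  exact hst (hT.2 p q hpq s hs t ht hps hqs hpt hqt)

lemma IsPSTS.inter_eq_singleton {T : Finset (Finset β)} (hT : IsPSTS T) {s t : Finset β}
    (hs : s ∈ T) (ht : t ∈ T) (hst : s ≠ t) {p : β} (hps : p ∈ s) (hpt : p ∈ t) :
    s ∩ t = {p} := by
  ext q
  simp only [Finset.mem_inter, Finset.mem_singleton]
  constructor
  · rintro ⟨h₁, h₂⟩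
    exact hT.point_eq hs ht hst h₁ h₂ hps hpt
  · rintro rfl
    exact ⟨hps, hpt⟩

lemma IsPSTS.ne_of_triple_mem {T : Finset (Finset β)} (hT : IsPSTS T) {a b c : β}
    (h : ({a, b, c} : Finset β) ∈ T) : a ≠ b ∧ a ≠ c ∧ b ≠ c := by
  have h3 := hT.1 _ h
  refine ⟨?_, ?_, ?_⟩ <;> rintro rfl
  · have := Finset.card_le_two (a := a) (b := c)
    simp_all
  · have := Finset.card_le_two (a := a) (b := b)
    rw [Finset.pair_comm, Finset.insert_comm] at h3
    simp_all
  · have := Finset.card_le_two (a := a) (b := b)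
    simp_all

lemma mem_ptsOf {C : Finset (Finset β)} {x : β} : x ∈ ptsOf C ↔ ∃ t ∈ C, x ∈ t := by
  simp [ptsOf, Finset.mem_sup]

/-- In a cyclic system a triple has no neighbours beyond two given ones. -/
lemma IsCyclicPSTS.eq_or_eq_of_inter {C : Finset (Finset β)} (hC : IsCyclicPSTS C)
    {t s r u : Finset β} (ht : t ∈ C) (hs : s ∈ C) (hr : r ∈ C) (hu : u ∈ C)
    (hst : s ≠ t) (hrt : r ≠ t) (hsr : s ≠ r) (hut : u ≠ t) (hs' : (s ∩ t).Nonempty)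
    (hr' : (r ∩ t).Nonempty) (hu' : (u ∩ t).Nonempty) : u = s ∨ u = r := by
  have hcard := hC.2.1 t ht
  have hsub : ({s, r} : Finset (Finset β)) ⊆ C.filter fun s => s ≠ t ∧ (s ∩ t).Nonempty := by
    intro x hx
    simp only [Finset.mem_insert, Finset.mem_singleton] at hx
    rcases hx with rfl | rfl
    · exact Finset.mem_filter.2 ⟨hs, hst, hs'⟩
    · exact Finset.mem_filter.2 ⟨hr, hrt, hr'⟩
  have heq := Finset.eq_of_subset_of_card_le hsub (by rw [hcard, Finset.card_pair hsr])
  have : u ∈ ({s, r} : Finset (Finset β)) := by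
    rw [heq]
    exact Finset.mem_filter.2 ⟨hu, hut, hu'⟩
  simpa using this

/-- A set of triples containing one triple and closed under adjacency is everything. -/
lemma IsCyclicPSTS.forall_of_closed {C : Finset (Finset β)} (hC : IsCyclicPSTS C)
    {S : Finset β → Prop} {t : Finset β} (ht : t ∈ C) (hSt : S t)
    (hS : ∀ s ∈ C, ∀ r ∈ C, r ≠ s → (r ∩ s).Nonempty → S s → S r) : ∀ s ∈ C, S s := by
  intro s hs
  induction hC.2.2 t ht s hs with
  | refl => exact hSt
  | tail _ h ih =>
    obtain ⟨hb, hc, hne, hbc⟩ := h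
    exact hS _ hb _ hc hne.symm (by rwa [Finset.inter_comm]) (ih hb)

/-- A cyclic PSTS with an even number of points is not three triples through a point, so
no point lies on three of its triples. -/
lemma IsCyclicPSTS.not_three_through {C : Finset (Finset β)} (hC : IsCyclicPSTS C)
    (hP : IsPSTS C) (heven : Even (ptsOf C).card) {t s r : Finset β} (ht : t ∈ C) (hs : s ∈ C)
    (hr : r ∈ C) (hst : s ≠ t) (hrt : r ≠ t) (hsr : s ≠ r) {p : β} (hpt : p ∈ t) (hps : p ∈ s)
    (hpr : p ∈ r) : False := by
  have hmeet : ∀ {x y : Finset β}, p ∈ x → p ∈ y → (x ∩ y).Nonempty :=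
    fun hx hy => ⟨p, Finset.mem_inter.2 ⟨hx, hy⟩⟩
  have hall : ∀ u ∈ C, u = t ∨ u = s ∨ u = r := by
    refine hC.forall_of_closed ht (Or.inl rfl) ?_
    rintro x hx y hy hyx hne (rfl | rfl | rfl)
    · have := hC.eq_or_eq_of_inter hx hs hr hy hst hrt hsr hyx (hmeet hps hpt) (hmeet hpr hpt) hne
      tauto
    · have := hC.eq_or_eq_of_inter hx ht hr hy hst.symm hsr.symm hrt.symm hyx (hmeet hpt hps)
        (hmeet hpr hps) hne
      tauto
    · have := hC.eq_or_eq_of_inter hx ht hs hy hrt.symm hsr hst.symm hyx (hmeet hpt hpr)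
        (hmeet hps hpr) hne
      tauto
  have hpts : ptsOf C = t ∪ s ∪ r := by
    ext x
    simp only [mem_ptsOf, Finset.mem_union]
    constructor
    · rintro ⟨u, hu, hx⟩
      rcases hall u hu with rfl | rfl | rfl <;> tauto
    · rintro ((h | h) | h)
      exacts [⟨t, ht, h⟩, ⟨s, hs, h⟩, ⟨r, hr, h⟩]
  have h₁ := Finset.card_union_add_card_inter t s
  have h₂ := Finset.card_union_add_card_inter (t ∪ s) r
  have h₃ : (t ∪ s) ∩ r = {p} := by
    rw [Finset.union_inter_distrib_right, hP.inter_eq_singleton ht hr hrt.symm hpt hpr,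
      hP.inter_eq_singleton hs hr hsr hps hpr, Finset.union_self]
  rw [hP.inter_eq_singleton ht hs hst.symm hpt hps, Finset.card_singleton, hP.1 t ht,
    hP.1 s hs] at h₁
  rw [h₃, Finset.card_singleton, hP.1 r hr, ← hpts] at h₂
  obtain ⟨m, hm⟩ := heven
  omega

/-- A walk that never turns back runs once around the cycle of triples. -/
lemma IsCyclicPSTS.exists_period {C : Finset (Finset β)} (hC : IsCyclicPSTS C)
    {t : ℕ → Finset β} (ht : ∀ i, t i ∈ C) (hne : ∀ i, t (i + 1) ≠ t i)
    (hmeet : ∀ i, (t (i + 1) ∩ t i).Nonempty) (hback : ∀ i, t (i + 2) ≠ t i) :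
    ∃ k, 3 ≤ k ∧ t k = t 0 ∧ (∀ i < k, ∀ j < k, t i = t j → i = j) ∧
      ∀ s ∈ C, ∃ i < k, s = t i := by
  have hrep : ∃ j, ∃ i < j, t i = t j := by
    obtain ⟨i, j, hij, h⟩ :=
      Finite.exists_ne_map_eq_of_infinite (fun i => (⟨t i, ht i⟩ : {s // s ∈ C}))
    have h' : t i = t j := congrArg Subtype.val h
    rcases lt_or_gt_of_ne hij with hlt | hlt
    exacts [⟨j, i, hlt, h'⟩, ⟨i, j, hlt, h'.symm⟩]
  obtain ⟨k, ⟨i, hik, hti⟩, hmin⟩ := Nat.findX hrep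
  have hinj' : ∀ b < k, ∀ a < b, t a ≠ t b := fun b hb a hab h => hmin b hb ⟨a, hab, h⟩
  have hinj : ∀ a < k, ∀ b < k, t a = t b → a = b := by
    intro a ha b hb h
    by_contra hab
    rcases lt_or_gt_of_ne hab with hlt | hlt
    exacts [hinj' b hb a hlt h, hinj' a ha b hlt h.symm]
  have hmeet' : ∀ i, (t i ∩ t (i + 1)).Nonempty := fun i => by
    rw [Finset.inter_comm]; exact hmeet i
  have hnbr : ∀ i, ∀ s ∈ C, s ≠ t (i + 1) → (s ∩ t (i + 1)).Nonempty →
      s = t i ∨ s = t (i + 2) := fun i s hs h h' =>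
    hC.eq_or_eq_of_inter (ht (i + 1)) (ht i) (ht (i + 2)) hs (hne i).symm (hne (i + 1))
      (hback i).symm h (hmeet' i) (hmeet (i + 1)) h'
  obtain ⟨l, rfl⟩ : ∃ l, k = l + 1 := ⟨k - 1, by omega⟩
  have hil : i < l := by
    rcases Nat.lt_or_ge i l with h | h
    · exact h
    · obtain rfl : i = l := by omega
      exact absurd hti.symm (hne i)
  have hil' : i + 1 < l := by
    rcases Nat.lt_or_ge (i + 1) l with h | h
    · exact h
    · obtain rfl : l = i + 1 := by omega
      exact absurd hti.symm (hback i)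
  obtain rfl : i = 0 := by
    by_contra hi
    obtain ⟨c, rfl⟩ : ∃ c, i = c + 1 := ⟨i - 1, by omega⟩
    rcases hnbr c (t l) (ht l) (by rw [hti]; exact (hne l).symm)
      (by rw [hti]; exact hmeet' l) with h | h
    · exact hinj' l (by omega) c (by omega) h.symm
    · exact hinj' l (by omega) (c + 2) (by omega) h.symm
  refine ⟨l + 1, by omega, hti.symm, hinj, ?_⟩
  refine hC.forall_of_closed (ht 0) ⟨0, by omega, rfl⟩ ?_
  rintro s hs r hr hrs hne' ⟨a, ha, rfl⟩
  rcases Nat.eq_zero_or_pos a with rfl | hpos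
  · have hl1 : t 1 ≠ t l := hinj' l (by omega) 1 (by omega)
    rcases hC.eq_or_eq_of_inter (ht 0) (ht 1) (ht l) hr (hne 0)
      (by rw [hti]; exact (hne l).symm) hl1 hrs (hmeet 0) (by rw [hti]; exact hmeet' l) hne'
      with h | h
    exacts [⟨1, by omega, h⟩, ⟨l, by omega, h⟩]
  · obtain ⟨c, rfl⟩ : ∃ c, a = c + 1 := ⟨a - 1, by omega⟩
    rcases hnbr c r hr hrs hne' with h | h
    · exact ⟨c, by omega, h⟩
    · rcases Nat.lt_or_ge (c + 2) (l + 1) with h' | h'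
      · exact ⟨c + 2, h', h⟩
      · obtain rfl : l = c + 1 := by omega
        exact ⟨0, by omega, by rw [h, hti]⟩

/-- A labelling of the triples of `C` as `{v i, w i, v (i + 1)}` for `i < k`, closing up at
`v k = v 0`, in which the points `v i`, `w i` (`i < k`) are distinct. -/
structure IsCycleLabelling (C : Finset (Finset β)) (k : ℕ) (v w : ℕ → β) : Prop where
  three_le : 3 ≤ k
  closed : v k = v 0
  v_inj : ∀ i < k, ∀ j < k, v i = v j → i = j
  w_inj : ∀ i < k, ∀ j < k, w i = w j → i = j
  v_ne_w : ∀ i < k, ∀ j < k, v i ≠ w j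
  mem_iff : ∀ t, t ∈ C ↔ ∃ i < k, t = {v i, w i, v (i + 1)}

lemma exists_mem_ne_of_card_eq_two {α : Type*} {S : Finset α} (h : S.card = 2) (a : α) :
    ∃ b ∈ S, b ≠ a :=
  Finset.exists_mem_ne (by omega) a

/-- From two adjacent triples one can walk around a cyclic system without turning back. -/
lemma IsCyclicPSTS.exists_walk {C : Finset (Finset β)} (hC : IsCyclicPSTS C) {r s : Finset β}
    (hr : r ∈ C) (hs : s ∈ C) (hrs : s ≠ r) (hmeet : (s ∩ r).Nonempty) :
    ∃ t : ℕ → Finset β, t 0 = r ∧ t 1 = s ∧ (∀ i, t i ∈ C) ∧ (∀ i, t (i + 1) ≠ t i) ∧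
      (∀ i, (t (i + 1) ∩ t i).Nonempty) ∧ ∀ i, t (i + 2) ≠ t i := by
  have hstep : ∀ x y : Finset β, ∃ u, y ∈ C → (u ∈ C ∧ u ≠ y ∧ (u ∩ y).Nonempty) ∧ u ≠ x := by
    intro x y
    by_cases hy : y ∈ C
    · obtain ⟨u, hu, hux⟩ := exists_mem_ne_of_card_eq_two (hC.2.1 y hy) x
      exact ⟨u, fun _ => ⟨Finset.mem_filter.1 hu, hux⟩⟩
    · exact ⟨x, fun h => absurd h hy⟩
  choose f hf using hstep
  let p : ℕ → Finset β × Finset β := fun i => Nat.rec (r, s) (fun _ q => (q.2, f q.1 q.2)) i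
  have hp : ∀ i, (p i).1 ∈ C ∧ (p i).2 ∈ C ∧ (p i).2 ≠ (p i).1 ∧ ((p i).2 ∩ (p i).1).Nonempty := by
    intro i
    induction i with
    | zero => exact ⟨hr, hs, hrs, hmeet⟩
    | succ i ih =>
      obtain ⟨⟨h₁, h₂, h₃⟩, _⟩ := hf (p i).1 (p i).2 ih.2.1
      exact ⟨ih.2.1, h₁, h₂, h₃⟩
  exact ⟨fun i => (p i).1, rfl, rfl, fun i => (hp i).1, fun i => (hp i).2.2.1,
    fun i => (hp i).2.2.2, fun i => (hf (p i).1 (p i).2 (hp i).2.1).2⟩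

lemma exists_third_point {t : Finset β} (ht : t.card = 3) {x y : β} (hx : x ∈ t) (hy : y ∈ t)
    (hxy : x ≠ y) : ∃ w, t = {x, w, y} ∧ w ≠ x ∧ w ≠ y := by
  have hsub : ({x, y} : Finset β) ⊆ t := by
    intro a ha
    simp only [Finset.mem_insert, Finset.mem_singleton] at ha
    rcases ha with rfl | rfl <;> assumption
  obtain ⟨w, hw⟩ := Finset.card_eq_one.1
    (show (t \ {x, y}).card = 1 by
      rw [Finset.card_sdiff_of_subset hsub, Finset.card_pair hxy, ht])
  have hmem : w ∈ t \ {x, y} := by rw [hw]; exact Finset.mem_singleton_self w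
  simp only [Finset.mem_sdiff, Finset.mem_insert, Finset.mem_singleton, not_or] at hmem
  refine ⟨w, ?_, hmem.2.1, hmem.2.2⟩
  rw [← Finset.sdiff_union_of_subset hsub, hw]
  ext a
  simp only [Finset.mem_union, Finset.mem_insert, Finset.mem_singleton]
  tauto

/-- Every cyclic PSTS with an even number of points can be labelled, starting from any
triple `{z, a, b}` whose points `z` and `a` lie on two triples. -/
lemma IsCyclicPSTS.exists_labelling {C : Finset (Finset β)} (hC : IsCyclicPSTS C)
    (hP : IsPSTS C) (heven : Even (ptsOf C).card) {z a b : β}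
    (h₀ : ({z, a, b} : Finset β) ∈ C) (hz : (C.filter fun t => z ∈ t).card = 2)
    (ha : (C.filter fun t => a ∈ t).card = 2) :
    ∃ (k : ℕ) (v w : ℕ → β), IsCycleLabelling C k v w ∧ v 0 = z ∧ v 1 = a := by
  obtain ⟨hza, -, -⟩ := hP.ne_of_triple_mem h₀
  obtain ⟨s, hs, hs₀⟩ := exists_mem_ne_of_card_eq_two ha {z, a, b}
  obtain ⟨r, hr, hr₀⟩ := exists_mem_ne_of_card_eq_two hz {z, a, b}
  obtain ⟨hs, has⟩ := Finset.mem_filter.1 hs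
  obtain ⟨hr, hzr⟩ := Finset.mem_filter.1 hr
  obtain ⟨t, ht0, ht1, htC, hne, hmeet, hback⟩ := hC.exists_walk h₀ hs hs₀
    ⟨a, Finset.mem_inter.2 ⟨has, by simp⟩⟩
  obtain ⟨k, hk, htk, hinj, hsurj⟩ := hC.exists_period htC hne hmeet hback
  have hstar : ∀ i < k, ∀ j < k, ∀ l < k, i ≠ j → i ≠ l → j ≠ l → ∀ p, p ∈ t i → p ∈ t j →
      p ∈ t l → False := fun i hi j hj l hl hij hil hjl p hpi hpj hpl =>
    hC.not_three_through hP heven (htC i) (htC j) (htC l) (fun h => hij (hinj j hj i hi h).symm)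
      (fun h => hil (hinj l hl i hi h).symm) (fun h => hjl (hinj j hj l hl h)) hpi hpj hpl
  have hz0 : z ∈ t 0 := by simp [ht0]
  have ha0 : a ∈ t 0 := by simp [ht0]
  have ha1 : a ∈ t 1 := by rwa [ht1]
  choose c hc using hmeet
  have hc₁ : ∀ i, c i ∈ t (i + 1) := fun i => (Finset.mem_inter.1 (hc i)).1
  have hc₂ : ∀ i, c i ∈ t i := fun i => (Finset.mem_inter.1 (hc i)).2
  have hc0 : c 0 = a := hP.point_eq (htC 1) (htC 0) (hne 0) (hc₁ 0) (hc₂ 0) ha1 ha0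
  have hzk : z ∈ t (k - 1) := by
    obtain ⟨j, hj, rfl⟩ := hsurj r hr
    by_contra hzk
    have hj0 : j ≠ 0 := by rintro rfl; exact hr₀ ht0
    have hjk : j ≠ k - 1 := by rintro rfl; exact hzk hzr
    have hk1 : t (k - 1 + 1) = t 0 := by rw [← htk]; congr 1; omega
    have h1 : t 1 ≠ t (k - 1) := fun h => by
      have := hinj 1 (by omega) (k - 1) (by omega) h
      omega
    rcases hC.eq_or_eq_of_inter (htC 0) (htC 1) (htC (k - 1)) (htC j) (hne 0)
      (by rw [← hk1]; exact (hne _).symm) h1 (by rw [ht0]; exact hr₀)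
      ⟨a, Finset.mem_inter.2 ⟨ha1, ha0⟩⟩
      ⟨c (k - 1), Finset.mem_inter.2 ⟨hc₂ _, by rw [← hk1]; exact hc₁ _⟩⟩
      ⟨z, Finset.mem_inter.2 ⟨hzr, hz0⟩⟩ with h | h
    · rw [h] at hzr
      exact hza (hP.point_eq (htC 1) (htC 0) (hne 0) hzr hz0 ha1 ha0)
    · exact hjk (hinj j hj _ (by omega) h)
  let v : ℕ → β := fun i => if i = 0 then z else c (i - 1)
  have hv0 : v 0 = z := rfl
  have hvt : ∀ i, v i ∈ t i := by
    rintro (_ | i)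
    exacts [hz0, hc₁ i]
  have hvt' : ∀ i, v (i + 1) ∈ t i := hc₂
  have hvne : ∀ i, v i ≠ v (i + 1) := by
    rintro (_ | i) h
    · exact hza (h.trans hc0)
    · refine hC.not_three_through hP heven (htC i) (htC (i + 1)) (htC (i + 2)) (hne i) (hback i)
        (hne (i + 1)).symm (hvt' i) (hvt (i + 1)) ?_
      rw [h]
      exact hvt (i + 2)
  choose w hw hwv hwv' using fun i => exists_third_point (hP.1 _ (htC i)) (hvt i) (hvt' i) (hvne i)
  have hwt : ∀ i, w i ∈ t i := fun i => by rw [hw i]; simp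
  have hprev : ∀ i < k, ∃ j < k, t j ≠ t i ∧ t j ≠ t (i + 1) ∧ v i ∈ t j := by
    rintro (_ | i) hi
    · refine ⟨k - 1, by omega, fun h => ?_, fun h => ?_, hzk⟩
      · have := hinj _ (by omega) _ (by omega) h
        omega
      · have := hinj _ (by omega) _ (by omega) h
        omega
    · exact ⟨i, by omega, (hne i).symm, (hback i).symm, hvt' i⟩
  have hw_only : ∀ i < k, ∀ j < k, w i ∈ t j → i = j := by
    intro i hi j hj hwj
    by_contra hij
    have hji : t j ≠ t i := fun h => hij (hinj j hj i hi h).symm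
    obtain ⟨l, hl, hli, hli', hvl⟩ := hprev i hi
    rcases hC.eq_or_eq_of_inter (htC i) (htC (i + 1)) (htC l) (htC j) (hne i) hli hli'.symm hji
      ⟨v (i + 1), Finset.mem_inter.2 ⟨hvt _, hvt' i⟩⟩ ⟨v i, Finset.mem_inter.2 ⟨hvl, hvt i⟩⟩
      ⟨w i, Finset.mem_inter.2 ⟨hwj, hwt i⟩⟩ with h | h
    · rw [h] at hwj
      exact hwv' i (hP.point_eq (htC _) (htC i) (hne i) hwj (hwt i) (hvt _) (hvt' i))
    · rw [h] at hwj
      exact hwv i (hP.point_eq (htC _) (htC i) hli hwj (hwt i) hvl (hvt i))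
  have hvlt : ∀ i j, i < j → j < k → v i ≠ v j := by
    intro i j hij hj h
    obtain ⟨d, rfl⟩ : ∃ d, j = d + 1 := ⟨j - 1, by omega⟩
    have hd : v i ∈ t d := h ▸ hvt' d
    have hd' : v i ∈ t (d + 1) := h ▸ hvt (d + 1)
    rcases Nat.eq_zero_or_pos i with rfl | hpos
    · rcases Nat.eq_zero_or_pos d with rfl | hd0
      · exact hvne 0 h
      · exact hstar 0 (by omega) d (by omega) (d + 1) hj (by omega) (by omega) (by omega) _
          (hvt 0) hd hd'
    · obtain ⟨e, rfl⟩ : ∃ e, i = e + 1 := ⟨i - 1, by omega⟩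
      exact hstar e (by omega) (e + 1) (by omega) (d + 1) hj (by omega) (by omega) (by omega) _
        (hvt' e) (hvt _) hd'
  refine ⟨k, v, w, ⟨hk, ?_, ?_, ?_, ?_, ?_⟩, hv0, hc0⟩
  · have hk1 : k - 1 + 1 = k := by omega
    have hvk : v k ∈ t (k - 1) := by simpa only [hk1] using hvt' (k - 1)
    refine hP.point_eq (htC (k - 1)) (htC k) ?_ hvk (hvt k) hzk (by rw [htk]; exact hz0)
    have := hne (k - 1)
    rw [hk1] at this
    exact this.symm
  · intro i hi j hj h
    by_contra hij
    rcases lt_or_gt_of_ne hij with hlt | hlt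
    exacts [hvlt i j hlt hj h, hvlt j i hlt hi h.symm]
  · intro i hi j hj h
    exact hw_only i hi j hj (h ▸ hwt j)
  · intro i hi j hj h
    have hji := hw_only j hj i hi (h ▸ hvt i)
    subst hji
    exact hwv j h.symm
  · intro s
    constructor
    · intro hs
      obtain ⟨i, hi, rfl⟩ := hsurj s hs
      exact ⟨i, hi, hw i⟩
    · rintro ⟨i, -, rfl⟩
      rw [← hw i]
      exact htC i

lemma IsCycleLabelling.mem_ptsOf_iff {C : Finset (Finset β)} {k : ℕ} {v w : ℕ → β}
    (h : IsCycleLabelling C k v w) {x : β} : x ∈ ptsOf C ↔ ∃ i < k, x = v i ∨ x = w i := by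
  rw [mem_ptsOf]
  constructor
  · rintro ⟨t, ht, hx⟩
    obtain ⟨i, hi, rfl⟩ := (h.mem_iff t).1 ht
    simp only [Finset.mem_insert, Finset.mem_singleton] at hx
    rcases hx with rfl | rfl | rfl
    · exact ⟨i, hi, Or.inl rfl⟩
    · exact ⟨i, hi, Or.inr rfl⟩
    · rcases Nat.lt_or_ge (i + 1) k with hlt | hge
      · exact ⟨i + 1, hlt, Or.inl rfl⟩
      · obtain rfl : k = i + 1 := by omega
        exact ⟨0, by omega, Or.inl h.closed⟩
  · rintro ⟨i, hi, hx⟩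
    refine ⟨_, (h.mem_iff _).2 ⟨i, hi, rfl⟩, ?_⟩
    simp only [Finset.mem_insert, Finset.mem_singleton]
    tauto

lemma IsCycleLabelling.v_mem {C : Finset (Finset β)} {k : ℕ} {v w : ℕ → β}
    (h : IsCycleLabelling C k v w) {i : ℕ} (hi : i < k) : v i ∈ ptsOf C :=
  h.mem_ptsOf_iff.2 ⟨i, hi, Or.inl rfl⟩

lemma IsCycleLabelling.w_mem {C : Finset (Finset β)} {k : ℕ} {v w : ℕ → β}
    (h : IsCycleLabelling C k v w) {i : ℕ} (hi : i < k) : w i ∈ ptsOf C :=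
  h.mem_ptsOf_iff.2 ⟨i, hi, Or.inr rfl⟩

lemma IsCycleLabelling.card_ptsOf {C : Finset (Finset β)} {k : ℕ} {v w : ℕ → β}
    (h : IsCycleLabelling C k v w) : (ptsOf C).card = 2 * k := by
  have heq : ptsOf C = (Finset.range k).image v ∪ (Finset.range k).image w := by
    ext x
    simp only [h.mem_ptsOf_iff, Finset.mem_union, Finset.mem_image, Finset.mem_range]
    constructor
    · rintro ⟨i, hi, rfl | rfl⟩
      exacts [Or.inl ⟨i, hi, rfl⟩, Or.inr ⟨i, hi, rfl⟩]
    · rintro (⟨i, hi, rfl⟩ | ⟨i, hi, rfl⟩)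
      exacts [⟨i, hi, Or.inl rfl⟩, ⟨i, hi, Or.inr rfl⟩]
  have hdisj : Disjoint ((Finset.range k).image v) ((Finset.range k).image w) := by
    rw [Finset.disjoint_left]
    intro x hx hx'
    simp only [Finset.mem_image, Finset.mem_range] at hx hx'
    obtain ⟨i, hi, rfl⟩ := hx
    obtain ⟨j, hj, hij⟩ := hx'
    exact h.v_ne_w i hi j hj hij.symm
  rw [heq, Finset.card_union_of_disjoint hdisj, Finset.card_image_of_injOn,
    Finset.card_image_of_injOn, Finset.card_range]
  · omega
  · intro i hi j hj hij
    exact h.w_inj i (by simpa using hi) j (by simpa using hj) hij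
  · intro i hi j hj hij
    exact h.v_inj i (by simpa using hi) j (by simpa using hj) hij

lemma IsCycleLabelling.v_injOn_succ {C : Finset (Finset β)} {k : ℕ} {v w : ℕ → β}
    (h : IsCycleLabelling C k v w) {i j : ℕ} (hi : i < k) (hj : j + 1 < k)
    (hij : v (i + 1) = v (j + 1)) : i = j := by
  rcases Nat.lt_or_ge (i + 1) k with hlt | hge
  · have := h.v_inj _ hlt _ hj hij
    omega
  · obtain rfl : k = i + 1 := by omega
    rw [h.closed] at hij
    have := h.v_inj _ (by omega) _ hj hij
    omega

/-- The only triples through `v (i + 1)` are the two consecutive ones. -/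
lemma IsCycleLabelling.eq_of_v_mem {C : Finset (Finset β)} {k : ℕ} {v w : ℕ → β}
    (h : IsCycleLabelling C k v w) {i : ℕ} (hi : i + 1 < k) {t : Finset β} (ht : t ∈ C)
    (hv : v (i + 1) ∈ t) :
    t = {v i, w i, v (i + 1)} ∨ t = {v (i + 1), w (i + 1), v (i + 2)} := by
  obtain ⟨j, hj, rfl⟩ := (h.mem_iff t).1 ht
  simp only [Finset.mem_insert, Finset.mem_singleton] at hv
  rcases hv with hv | hv | hv
  · obtain rfl := h.v_inj _ hi _ hj hv
    exact Or.inr rfl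
  · exact absurd hv (h.v_ne_w _ hi _ hj)
  · obtain rfl := h.v_injOn_succ hj hi hv.symm
    exact Or.inl rfl

lemma IsCycleLabelling.index_eq_of_w_mem {C : Finset (Finset β)} {k : ℕ} {v w : ℕ → β}
    (h : IsCycleLabelling C k v w) {i j : ℕ} (hi : i < k) (hj : j < k)
    (hw : w i ∈ ({v j, w j, v (j + 1)} : Finset β)) : i = j := by
  simp only [Finset.mem_insert, Finset.mem_singleton] at hw
  rcases hw with hw | hw | hw
  · exact absurd hw.symm (h.v_ne_w _ hj _ hi)
  · exact h.w_inj _ hi _ hj hw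
  · rcases Nat.lt_or_ge (j + 1) k with hlt | hge
    · exact absurd hw.symm (h.v_ne_w _ hlt _ hi)
    · obtain rfl : k = j + 1 := by omega
      rw [h.closed] at hw
      exact absurd hw.symm (h.v_ne_w _ (by omega) _ hi)

/-- The only triple through `w i` is the `i`-th one. -/
lemma IsCycleLabelling.eq_of_w_mem {C : Finset (Finset β)} {k : ℕ} {v w : ℕ → β}
    (h : IsCycleLabelling C k v w) {i : ℕ} (hi : i < k) {t : Finset β} (ht : t ∈ C)
    (hw : w i ∈ t) : t = {v i, w i, v (i + 1)} := by
  obtain ⟨j, hj, rfl⟩ := (h.mem_iff t).1 ht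
  rw [h.index_eq_of_w_mem hi hj hw]

lemma IsCycleLabelling.triple_inj {C : Finset (Finset β)} {k : ℕ} {v w : ℕ → β}
    (h : IsCycleLabelling C k v w) {i j : ℕ} (hi : i < k) (hj : j < k)
    (hij : ({v i, w i, v (i + 1)} : Finset β) = {v j, w j, v (j + 1)}) : i = j :=
  h.index_eq_of_w_mem hi hj (by rw [← hij]; simp)

/-- `C` is a labelled cycle in `T` such that, apart from the base point `v 0`, its points lie
only on triples of `C` and possibly on `E`, which avoids the points `w i`. -/
structure IsCycleIn (T C : Finset (Finset β)) (E : Finset β) (k : ℕ) (v w : ℕ → β) : Prop where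
  labelling : IsCycleLabelling C k v w
  subset : C ⊆ T
  mem_or_eq : ∀ t ∈ T, ∀ x ∈ ptsOf C, x ≠ v 0 → x ∈ t → t ∈ C ∨ t = E
  w_notMem : ∀ i < k, w i ∉ E
  notMem : E ∉ C

/-- An injective map preserving triples and `E`, and matching the base points and first steps
of two labelled cycles, matches the cycles label by label. -/
lemma IsCycleIn.map_eq {T C D : Finset (Finset β)} {E : Finset β} {k l : ℕ} {v w u x : ℕ → β}
    (hT : IsPSTS T) (hC : IsCycleIn T C E k v w) (hD : IsCycleIn T D E l u x) (hkl : k ≤ l)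
    {g : β → β} (hg : Function.Injective g) (hgT : ∀ t ∈ T, t.image g ∈ T)
    (hE : E.image g = E) (h0 : g (v 0) = u 0) (h1 : g (v 1) = u 1) :
    ∀ i < k, g (v i) = u i ∧ g (v (i + 1)) = u (i + 1) ∧ g (w i) = x i := by
  have hL := hC.labelling
  have hM := hD.labelling
  have htC : ∀ i < k, ({v i, w i, v (i + 1)} : Finset β) ∈ C := fun i hi =>
    (hL.mem_iff _).2 ⟨i, hi, rfl⟩
  have htD : ∀ i < l, ({u i, x i, u (i + 1)} : Finset β) ∈ D := fun i hi =>
    (hM.mem_iff _).2 ⟨i, hi, rfl⟩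
  have himage : ∀ i < k, g (v i) = u i → g (v (i + 1)) = u (i + 1) →
      ({v i, w i, v (i + 1)} : Finset β).image g = {u i, x i, u (i + 1)} := by
    intro i hi ha hb
    have hne := hT.ne_of_triple_mem (hD.subset (htD i (by omega)))
    refine hT.2 _ _ hne.2.1 _ (hgT _ (hC.subset (htC i hi))) _ (hD.subset (htD i (by omega)))
      ?_ ?_ (by simp) (by simp)
    · rw [← ha]; exact Finset.mem_image_of_mem g (by simp)
    · rw [← hb]; exact Finset.mem_image_of_mem g (by simp)
  have hend : ∀ i < k, g (v i) = u i ∧ g (v (i + 1)) = u (i + 1) := by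
    intro i
    induction i with
    | zero => exact fun _ => ⟨h0, h1⟩
    | succ i ih =>
      intro hi
      obtain ⟨ha, hb⟩ := ih (by omega)
      refine ⟨hb, ?_⟩
      have him := himage i (by omega) ha hb
      have htri := hgT _ (hC.subset (htC (i + 1) hi))
      have hmem : u (i + 1) ∈ ({v (i + 1), w (i + 1), v (i + 1 + 1)} : Finset β).image g := by
        rw [← hb]; exact Finset.mem_image_of_mem g (by simp)
      have hu0 : u (i + 1) ≠ u 0 := fun h => by
        have := hM.v_inj _ (by omega) _ (by omega) h
        omega
      have hneE : ({v (i + 1), w (i + 1), v (i + 1 + 1)} : Finset β).image g ≠ E := by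
        intro h
        rw [← hE] at h
        exact hC.notMem (Finset.image_injective hg h ▸ htC _ hi)
      have hinD := (hD.mem_or_eq _ htri _ (hM.v_mem (by omega)) hu0 hmem).resolve_right hneE
      have hnext : ({v (i + 1), w (i + 1), v (i + 1 + 1)} : Finset β).image g
          = {u (i + 1), x (i + 1), u (i + 1 + 1)} := by
        refine (hM.eq_of_v_mem (by omega) hinD hmem).resolve_left fun h => ?_
        rw [← him] at h
        have := hL.triple_inj hi (by omega) (Finset.image_injective hg h)
        omega
      have hv2 : g (v (i + 1 + 1)) ∈ ({u (i + 1), x (i + 1), u (i + 1 + 1)} : Finset β) := by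
        rw [← hnext]; exact Finset.mem_image_of_mem g (by simp)
      simp only [Finset.mem_insert, Finset.mem_singleton] at hv2
      have hne := hT.ne_of_triple_mem (hC.subset (htC (i + 1) hi))
      rcases hv2 with h | h | h
      · exact absurd (hg (h.trans hb.symm)) hne.2.1.symm
      · exfalso
        obtain ⟨j, hj, hji, hvj⟩ : ∃ j < k, j ≠ i + 1 ∧
            v (i + 1 + 1) ∈ ({v j, w j, v (j + 1)} : Finset β) := by
          rcases Nat.lt_or_ge (i + 1 + 1) k with hlt | hge
          · exact ⟨i + 1 + 1, hlt, by omega, by simp⟩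
          · obtain rfl : k = i + 1 + 1 := by omega
            exact ⟨0, by omega, by omega, by rw [hL.closed]; simp⟩
        have hxj : x (i + 1) ∈ ({v j, w j, v (j + 1)} : Finset β).image g := by
          rw [← h]; exact Finset.mem_image_of_mem g hvj
        have hx0 : x (i + 1) ≠ u 0 := (hM.v_ne_w _ (by omega) _ (by omega)).symm
        have hinD' := (hD.mem_or_eq _ (hgT _ (hC.subset (htC j hj))) _ (hM.w_mem (by omega)) hx0
          hxj).resolve_right fun h => hD.w_notMem (i + 1) (by omega) (h ▸ hxj)
        have heq := hM.eq_of_w_mem (by omega) hinD' hxj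
        rw [← hnext] at heq
        exact hji (hL.triple_inj hj hi (Finset.image_injective hg heq))
      · exact h
  intro i hi
  obtain ⟨ha, hb⟩ := hend i hi
  refine ⟨ha, hb, ?_⟩
  have hmem : g (w i) ∈ ({u i, x i, u (i + 1)} : Finset β) := by
    rw [← himage i hi ha hb]; exact Finset.mem_image_of_mem g (by simp)
  simp only [Finset.mem_insert, Finset.mem_singleton] at hmem
  have hne := hT.ne_of_triple_mem (hC.subset (htC i hi))
  rcases hmem with h | h | h
  · exact absurd (hg (h.trans ha.symm)) hne.1.symm
  · exact h
  · exact absurd (hg (h.trans hb.symm)) hne.2.2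

/-- A labelling of a system `Q(z)`: its two cycles `C₁`, `C₂` are labelled from the common
point `z = v 0 = u 0`, with `v 1`, `u 1` on the additional triple through the new point `p`. -/
structure IsQLabelling (n : ℕ) (T : Finset (Finset β)) (P : Finset β)
    (C₁ C₂ : Finset (Finset β)) (v w u x : ℕ → β) (p : β) : Prop where
  psts : IsPSTS T
  cyclic₁ : IsCyclicPSTS C₁
  cyclic₂ : IsCyclicPSTS C₂
  labelling₁ : IsCycleLabelling C₁ (n + 2) v w
  labelling₂ : IsCycleLabelling C₂ (n + 3) u x
  base : u 0 = v 0
  inter : ptsOf C₁ ∩ ptsOf C₂ = {v 0}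
  notMem₁ : p ∉ ptsOf C₁
  notMem₂ : p ∉ ptsOf C₂
  triples : T = C₁ ∪ C₂ ∪ {({v 1, p, u 1} : Finset β)}
  points : P = ptsOf C₁ ∪ ptsOf C₂ ∪ {p}
  card₁ : (C₁.filter fun t => v 0 ∈ t).card = 2
  card₂ : (C₂.filter fun t => v 0 ∈ t).card = 2
  card₁' : (C₁.filter fun t => v 1 ∈ t).card = 2
  card₂' : (C₂.filter fun t => u 1 ∈ t).card = 2

lemma IsQ.exists_labelling {n : ℕ} {T : Finset (Finset β)} {P : Finset β} {z : β}
    (h : IsQ n T P z) : ∃ (C₁ C₂ : Finset (Finset β)) (v w u x : ℕ → β) (p : β),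
      IsQLabelling n T P C₁ C₂ v w u x p := by
  obtain ⟨C₁, C₂, p, a₁, a₂, b₁, b₂, hT, hC₁, hC₂, hc₁, hc₂, hint, hz₁, hz₂, ht₁, ha₁, ht₂, ha₂,
    hp, rfl, rfl⟩ := h
  have hP₁ : IsPSTS C₁ := hT.mono fun t ht => by simp [ht]
  have hP₂ : IsPSTS C₂ := hT.mono fun t ht => by simp [ht]
  obtain ⟨k, v, w, hv, rfl, rfl⟩ := hC₁.exists_labelling hP₁ ⟨n + 2, by omega⟩ ht₁ hz₁ ha₁
  obtain ⟨l, u, x, hu, hu0, rfl⟩ := hC₂.exists_labelling hP₂ ⟨n + 3, by omega⟩ ht₂ hz₂ ha₂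
  obtain rfl : k = n + 2 := by have := hv.card_ptsOf; omega
  obtain rfl : l = n + 3 := by have := hu.card_ptsOf; omega
  rw [Finset.mem_union, not_or] at hp
  exact ⟨C₁, C₂, v, w, u, x, p, hT, hC₁, hC₂, hv, hu, hu0, hint, hp.1, hp.2, rfl, rfl, hz₁, hz₂,
    ha₁, ha₂⟩

namespace IsQLabelling

variable {n : ℕ} {T : Finset (Finset β)} {P : Finset β} {C₁ C₂ : Finset (Finset β)}
  {v w u x : ℕ → β} {p : β}

lemma mem_triples (h : IsQLabelling n T P C₁ C₂ v w u x p) {t : Finset β} :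
    t ∈ T ↔ t ∈ C₁ ∨ t ∈ C₂ ∨ t = {v 1, p, u 1} := by
  rw [h.triples]
  simp only [Finset.mem_union, Finset.mem_singleton, or_assoc]

lemma subset₁ (h : IsQLabelling n T P C₁ C₂ v w u x p) : C₁ ⊆ T :=
  fun _ ht => h.mem_triples.2 (Or.inl ht)

lemma subset₂ (h : IsQLabelling n T P C₁ C₂ v w u x p) : C₂ ⊆ T :=
  fun _ ht => h.mem_triples.2 (Or.inr (Or.inl ht))

lemma extra_mem (h : IsQLabelling n T P C₁ C₂ v w u x p) : ({v 1, p, u 1} : Finset β) ∈ T :=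
  h.mem_triples.2 (Or.inr (Or.inr rfl))

lemma eq_base (h : IsQLabelling n T P C₁ C₂ v w u x p) {y : β} (h₁ : y ∈ ptsOf C₁)
    (h₂ : y ∈ ptsOf C₂) : y = v 0 := by
  have : y ∈ ptsOf C₁ ∩ ptsOf C₂ := Finset.mem_inter.2 ⟨h₁, h₂⟩
  rwa [h.inter, Finset.mem_singleton] at this

lemma v_one_ne (h : IsQLabelling n T P C₁ C₂ v w u x p) : v 1 ≠ v 0 := fun e => by
  have := h.labelling₁.v_inj _ (by omega) _ (by omega) e
  omega

lemma u_one_ne (h : IsQLabelling n T P C₁ C₂ v w u x p) : u 1 ≠ v 0 := fun e => by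
  have := h.labelling₂.v_inj _ (by omega) _ (by omega) (e.trans h.base.symm)
  omega

lemma v_one_notMem (h : IsQLabelling n T P C₁ C₂ v w u x p) : v 1 ∉ ptsOf C₂ := fun e =>
  h.v_one_ne (h.eq_base (h.labelling₁.v_mem (by omega)) e)

lemma u_one_notMem (h : IsQLabelling n T P C₁ C₂ v w u x p) : u 1 ∉ ptsOf C₁ := fun e =>
  h.u_one_ne (h.eq_base e (h.labelling₂.v_mem (by omega)))

lemma extra_notMem₁ (h : IsQLabelling n T P C₁ C₂ v w u x p) :
    ({v 1, p, u 1} : Finset β) ∉ C₁ := fun e =>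
  h.notMem₁ (mem_ptsOf.2 ⟨_, e, by simp⟩)

lemma extra_notMem₂ (h : IsQLabelling n T P C₁ C₂ v w u x p) :
    ({v 1, p, u 1} : Finset β) ∉ C₂ := fun e =>
  h.notMem₂ (mem_ptsOf.2 ⟨_, e, by simp⟩)

lemma isCycleIn₁ (h : IsQLabelling n T P C₁ C₂ v w u x p) :
    IsCycleIn T C₁ {v 1, p, u 1} (n + 2) v w where
  labelling := h.labelling₁
  subset := h.subset₁
  mem_or_eq t ht y hy hy0 hyt := by
    rcases h.mem_triples.1 ht with ht | ht | ht
    · exact Or.inl ht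
    · exact absurd (h.eq_base hy (mem_ptsOf.2 ⟨t, ht, hyt⟩)) hy0
    · exact Or.inr ht
  w_notMem i hi hw := by
    have hmem := h.labelling₁.w_mem hi
    simp only [Finset.mem_insert, Finset.mem_singleton] at hw
    rcases hw with e | e | e
    · exact h.labelling₁.v_ne_w 1 (by omega) i hi e.symm
    · exact h.notMem₁ (e ▸ hmem)
    · exact h.u_one_notMem (e ▸ hmem)
  notMem := h.extra_notMem₁

lemma isCycleIn₂ (h : IsQLabelling n T P C₁ C₂ v w u x p) :
    IsCycleIn T C₂ {v 1, p, u 1} (n + 3) u x where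
  labelling := h.labelling₂
  subset := h.subset₂
  mem_or_eq t ht y hy hy0 hyt := by
    rcases h.mem_triples.1 ht with ht | ht | ht
    · exact absurd ((h.eq_base (mem_ptsOf.2 ⟨t, ht, hyt⟩) hy).trans h.base.symm) hy0
    · exact Or.inl ht
    · exact Or.inr ht
  w_notMem i hi hw := by
    have hmem := h.labelling₂.w_mem hi
    simp only [Finset.mem_insert, Finset.mem_singleton] at hw
    rcases hw with e | e | e
    · exact h.v_one_notMem (e ▸ hmem)
    · exact h.notMem₂ (e ▸ hmem)
    · exact h.labelling₂.v_ne_w 1 (by omega) i hi e.symm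
  notMem := h.extra_notMem₂

end IsQLabelling

lemma IsCyclicPSTS.card_through_le {C : Finset (Finset β)} (hC : IsCyclicPSTS C)
    (hP : IsPSTS C) (heven : Even (ptsOf C).card) (y : β) :
    (C.filter fun t => y ∈ t).card ≤ 2 := by
  by_contra hlt
  obtain ⟨t, ht, s, hs, r, hr, hts, htr, hsr⟩ := Finset.two_lt_card.1 (not_le.1 hlt)
  rw [Finset.mem_filter] at ht hs hr
  exact hC.not_three_through hP heven ht.1 hs.1 hr.1 hts.symm htr.symm hsr ht.2 hs.2 hr.2

lemma filter_mem_eq_empty {C : Finset (Finset β)} {y : β} (hy : y ∉ ptsOf C) :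
    (C.filter fun t => y ∈ t) = ∅ :=
  Finset.filter_eq_empty_iff.2 fun t ht h => hy (mem_ptsOf.2 ⟨t, ht, h⟩)

/-- A triple-preserving permutation preserves the number of triples through a point. -/
lemma card_through_map {T : Finset (Finset β)} {g : Equiv.Perm β} (hg : IsAut T g) (y : β) :
    (T.filter fun t => g y ∈ t).card = (T.filter fun t => y ∈ t).card := by
  symm
  refine Finset.card_bij (fun t _ => t.image g) ?_ ?_ ?_
  · intro t ht
    rw [Finset.mem_filter] at ht ⊢
    exact ⟨(hg t).1 ht.1, Finset.mem_image_of_mem g ht.2⟩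
  · intro s _ t _ h
    exact Finset.image_injective g.injective h
  · intro t ht
    rw [Finset.mem_filter] at ht
    have himage : (t.image g.symm).image g = t := by
      rw [Finset.image_image]
      simp
    refine ⟨t.image g.symm, Finset.mem_filter.2 ⟨(hg _).2 (himage.symm ▸ ht.1), ?_⟩, himage⟩
    exact Finset.mem_image.2 ⟨g y, ht.2, g.symm_apply_apply y⟩

namespace IsQLabelling

variable {n : ℕ} {T : Finset (Finset β)} {P : Finset β} {C₁ C₂ : Finset (Finset β)}
  {v w u x : ℕ → β} {p : β}

lemma card_through_le (h : IsQLabelling n T P C₁ C₂ v w u x p) {y : β} (hy : y ≠ v 0) :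
    (T.filter fun t => y ∈ t).card ≤ 3 ∧
      (3 ≤ (T.filter fun t => y ∈ t).card → y = v 1 ∨ y = u 1) := by
  have hle₁ := h.cyclic₁.card_through_le (h.psts.mono h.subset₁)
    ⟨n + 2, by rw [h.labelling₁.card_ptsOf]; omega⟩ y
  have hle₂ := h.cyclic₂.card_through_le (h.psts.mono h.subset₂)
    ⟨n + 3, by rw [h.labelling₂.card_ptsOf]; omega⟩ y
  have hsum : (T.filter fun t => y ∈ t).card ≤ (C₁.filter fun t => y ∈ t).card +
      (C₂.filter fun t => y ∈ t).card +
        (({({v 1, p, u 1} : Finset β)} : Finset (Finset β)).filter fun t => y ∈ t).card := by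
    rw [h.triples, Finset.filter_union, Finset.filter_union]
    exact (Finset.card_union_le _ _).trans (Nat.add_le_add_right (Finset.card_union_le _ _) _)
  have hor : (C₁.filter fun t => y ∈ t).card = 0 ∨ (C₂.filter fun t => y ∈ t).card = 0 := by
    by_cases hy₁ : y ∈ ptsOf C₁
    · right
      rw [filter_mem_eq_empty fun hy₂ => hy (h.eq_base hy₁ hy₂), Finset.card_empty]
    · left
      rw [filter_mem_eq_empty hy₁, Finset.card_empty]
  by_cases hyE : y ∈ ({v 1, p, u 1} : Finset β)
  · rw [Finset.filter_singleton, if_pos hyE, Finset.card_singleton] at hsum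
    refine ⟨by omega, fun h3 => ?_⟩
    simp only [Finset.mem_insert, Finset.mem_singleton] at hyE
    rcases hyE with e | rfl | e
    · exact Or.inl e
    · rw [filter_mem_eq_empty h.notMem₁, filter_mem_eq_empty h.notMem₂] at hsum
      simp only [Finset.card_empty] at hsum
      omega
    · exact Or.inr e
  · rw [Finset.filter_singleton, if_neg hyE, Finset.card_empty] at hsum
    exact ⟨by omega, fun h3 => by omega⟩

lemma four_le_card_through (h : IsQLabelling n T P C₁ C₂ v w u x p) :
    4 ≤ (T.filter fun t => v 0 ∈ t).card := by
  have hdisj : Disjoint (C₁.filter fun t => v 0 ∈ t) (C₂.filter fun t => v 0 ∈ t) := by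
    rw [Finset.disjoint_left]
    intro t ht₁ ht₂
    rw [Finset.mem_filter] at ht₁ ht₂
    have h3 := h.psts.1 t (h.subset₁ ht₁.1)
    have hsub : t ⊆ {v 0} := fun y hy => Finset.mem_singleton.2
      (h.eq_base (mem_ptsOf.2 ⟨t, ht₁.1, hy⟩) (mem_ptsOf.2 ⟨t, ht₂.1, hy⟩))
    have := Finset.card_le_card hsub
    rw [Finset.card_singleton] at this
    omega
  have hcard := Finset.card_union_of_disjoint hdisj
  rw [h.card₁, h.card₂] at hcard
  refine hcard.ge.trans (Finset.card_le_card (Finset.union_subset ?_ ?_))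
  · exact Finset.filter_subset_filter _ h.subset₁
  · exact Finset.filter_subset_filter _ h.subset₂

end IsQLabelling

/-- A point on two triples of a subsystem `C` and on a further triple lies on three triples. -/
lemma three_le_card_through {T C : Finset (Finset β)} {E : Finset β} {y : β} (hC : C ⊆ T)
    (hE : E ∈ T) (hEC : E ∉ C) (hy : y ∈ E) (hcard : (C.filter fun t => y ∈ t).card = 2) :
    3 ≤ (T.filter fun t => y ∈ t).card := by
  have hins := Finset.card_insert_of_notMem (s := C.filter fun t => y ∈ t)
    fun h => hEC (Finset.mem_filter.1 h).1
  rw [hcard] at hins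
  refine hins.ge.trans (Finset.card_le_card
    (Finset.insert_subset (Finset.mem_filter.2 ⟨hE, hy⟩) ?_))
  exact Finset.filter_subset_filter _ hC

namespace IsQLabelling

variable {n : ℕ} {T : Finset (Finset β)} {P : Finset β} {C₁ C₂ : Finset (Finset β)}
  {v w u x : ℕ → β} {p : β}

/-- Every automorphism of a system `Q(z)` fixes all its points. -/
theorem apply_eq_of_isAut (h : IsQLabelling n T P C₁ C₂ v w u x p) {g : Equiv.Perm β}
    (hg : IsAut T g) {y : β} (hy : y ∈ P) : g y = y := by
  have hgT : ∀ t ∈ T, t.image g ∈ T := fun t ht => (hg t).1 ht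
  have hg0 : g (v 0) = v 0 := by
    by_contra hne
    have := (h.card_through_le hne).1
    rw [card_through_map hg] at this
    have := h.four_le_card_through
    omega
  have hbranch : ∀ y, y ≠ v 0 → 3 ≤ (T.filter fun t => y ∈ t).card →
      g y = v 1 ∨ g y = u 1 := by
    intro y hy0 hy3
    refine (h.card_through_le fun e => hy0 (g.injective (e.trans hg0.symm))).2 ?_
    rwa [card_through_map hg]
  have hgv := hbranch (v 1) h.v_one_ne
    (three_le_card_through h.subset₁ h.extra_mem h.extra_notMem₁ (by simp) h.card₁')
  have hgu := hbranch (u 1) h.u_one_ne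
    (three_le_card_through h.subset₂ h.extra_mem h.extra_notMem₂ (by simp) h.card₂')
  obtain ⟨hvp, hvu, hpu⟩ := h.psts.ne_of_triple_mem h.extra_mem
  have hguv : g (v 1) ≠ g (u 1) := fun e => hvu (g.injective e)
  have hE : ({v 1, p, u 1} : Finset β).image g = {v 1, p, u 1} := by
    have hv' : g (v 1) ∈ ({v 1, p, u 1} : Finset β).image g :=
      Finset.mem_image_of_mem g (by simp)
    have hu' : g (u 1) ∈ ({v 1, p, u 1} : Finset β).image g :=
      Finset.mem_image_of_mem g (by simp)
    refine h.psts.2 _ _ hguv _ (hgT _ h.extra_mem) _ h.extra_mem hv' hu' ?_ ?_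
    · rcases hgv with e | e <;> simp [e]
    · rcases hgu with e | e <;> simp [e]
  have hv1 : g (v 1) = v 1 := by
    refine hgv.resolve_right fun e => ?_
    have hmap := h.isCycleIn₁.map_eq h.psts h.isCycleIn₂ (by omega) g.injective hgT hE
      (hg0.trans h.base.symm) e (n + 1) (by omega)
    have hclosed : g (v (n + 2)) = u (n + 2) := hmap.2.1
    rw [h.labelling₁.closed, hg0, ← h.base] at hclosed
    have := h.labelling₂.v_inj _ (by omega) _ (by omega) hclosed
    omega
  have hu1 : g (u 1) = u 1 := hgu.resolve_left fun e => hguv (hv1.trans e.symm)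
  rw [h.points] at hy
  simp only [Finset.mem_union, Finset.mem_singleton] at hy
  rcases hy with (hy | hy) | rfl
  · obtain ⟨i, hi, hyi⟩ := h.labelling₁.mem_ptsOf_iff.1 hy
    have hmap := h.isCycleIn₁.map_eq h.psts h.isCycleIn₁ le_rfl g.injective hgT hE hg0 hv1 i hi
    rcases hyi with rfl | rfl
    exacts [hmap.1, hmap.2.2]
  · obtain ⟨i, hi, hyi⟩ := h.labelling₂.mem_ptsOf_iff.1 hy
    have hmap := h.isCycleIn₂.map_eq h.psts h.isCycleIn₂ le_rfl g.injective hgT hE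
      (by rw [h.base, hg0]) hu1 i hi
    rcases hyi with rfl | rfl
    exacts [hmap.1, hmap.2.2]
  · have hmem : g y ∈ ({v 1, y, u 1} : Finset β) := by
      rw [← hE]; exact Finset.mem_image_of_mem g (by simp)
    simp only [Finset.mem_insert, Finset.mem_singleton] at hmem
    rcases hmem with e | e | e
    · exact absurd (g.injective (e.trans hv1.symm)) hvp.symm
    · exact e
    · exact absurd (g.injective (e.trans hu1.symm)) hpu

end IsQLabelling

/-- Abstract names for the points of a system `Q(z)`. -/
inductive QLabel
  | v (i : ℕ)
  | w (i : ℕ)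
  | u (i : ℕ)
  | x (i : ℕ)
  | new

namespace QLabel

/-- The point named by a label. -/
def toPoint (v w u x : ℕ → β) (p : β) : QLabel → β
  | .v i => v i
  | .w i => w i
  | .u i => u i
  | .x i => x i
  | .new => p

/-- The labels in use for the parameter `n`; the base point is named `v 0` only. -/
def Valid (n : ℕ) : QLabel → Prop
  | .v i => i < n + 2
  | .w i => i < n + 2
  | .u i => 0 < i ∧ i < n + 3
  | .x i => i < n + 3
  | .new => True

/-- The label of the `i`-th vertex of the first cycle, for `i ≤ n + 2`. -/
def vertex₁ (n i : ℕ) : QLabel := if i = n + 2 then .v 0 else .v i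

/-- The label of the `i`-th vertex of the second cycle, for `i ≤ n + 3`. -/
def vertex₂ (n i : ℕ) : QLabel := if i = 0 ∨ i = n + 3 then .v 0 else .u i

/-- The label triples for the parameter `n`. -/
def triples (n : ℕ) : Set (Finset QLabel) :=
  {s | (∃ i < n + 2, s = {vertex₁ n i, .w i, vertex₁ n (i + 1)}) ∨
    (∃ i < n + 3, s = {vertex₂ n i, .x i, vertex₂ n (i + 1)}) ∨ s = {.v 1, .new, .u 1}}

lemma valid_vertex₁ {n i : ℕ} (hi : i ≤ n + 2) : (vertex₁ n i).Valid n := by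
  unfold vertex₁
  split_ifs with h
  · exact Nat.succ_pos _
  · exact lt_of_le_of_ne hi h

lemma valid_vertex₂ {n i : ℕ} (hi : i ≤ n + 3) : (vertex₂ n i).Valid n := by
  unfold vertex₂
  split_ifs with h
  · exact Nat.succ_pos _
  · rw [not_or] at h
    exact ⟨Nat.pos_of_ne_zero h.1, lt_of_le_of_ne hi h.2⟩

lemma valid_of_mem_triples {n : ℕ} {s : Finset QLabel} (hs : s ∈ triples n) :
    ∀ l ∈ s, l.Valid n := by
  intro l hl
  rcases hs with ⟨i, hi, rfl⟩ | ⟨i, hi, rfl⟩ | rfl <;>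
    simp only [Finset.mem_insert, Finset.mem_singleton] at hl <;> rcases hl with rfl | rfl | rfl
  · exact valid_vertex₁ (by omega)
  · exact hi
  · exact valid_vertex₁ (by omega)
  · exact valid_vertex₂ (by omega)
  · exact hi
  · exact valid_vertex₂ (by omega)
  · exact show 1 < n + 2 by omega
  · exact trivial
  · exact show 0 < 1 ∧ 1 < n + 3 by omega

end QLabel

namespace IsQLabelling

variable {n : ℕ} {T : Finset (Finset β)} {P : Finset β} {C₁ C₂ : Finset (Finset β)}
  {v w u x : ℕ → β} {p : β}

lemma toPoint_vertex₁ (h : IsQLabelling n T P C₁ C₂ v w u x p) (i : ℕ) :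
    (QLabel.vertex₁ n i).toPoint v w u x p = v i := by
  unfold QLabel.vertex₁
  split_ifs with hi
  · rw [hi, h.labelling₁.closed, QLabel.toPoint]
  · rfl

lemma toPoint_vertex₂ (h : IsQLabelling n T P C₁ C₂ v w u x p) (i : ℕ) :
    (QLabel.vertex₂ n i).toPoint v w u x p = u i := by
  unfold QLabel.vertex₂
  split_ifs with hi
  · rcases hi with rfl | rfl
    · exact h.base.symm
    · rw [h.labelling₂.closed, h.base, QLabel.toPoint]
  · rfl

lemma mem_triples_iff (h : IsQLabelling n T P C₁ C₂ v w u x p) {t : Finset β} :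
    t ∈ T ↔ ∃ s ∈ QLabel.triples n, s.image (QLabel.toPoint v w u x p) = t := by
  rw [h.mem_triples, h.labelling₁.mem_iff, h.labelling₂.mem_iff]
  constructor
  · rintro (⟨i, hi, rfl⟩ | ⟨i, hi, rfl⟩ | rfl)
    · refine ⟨_, Or.inl ⟨i, hi, rfl⟩, ?_⟩
      simp only [Finset.image_insert, Finset.image_singleton, h.toPoint_vertex₁]
      rfl
    · refine ⟨_, Or.inr (Or.inl ⟨i, hi, rfl⟩), ?_⟩
      simp only [Finset.image_insert, Finset.image_singleton, h.toPoint_vertex₂]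
      rfl
    · refine ⟨_, Or.inr (Or.inr rfl), ?_⟩
      simp only [Finset.image_insert, Finset.image_singleton, QLabel.toPoint]
  · rintro ⟨s, ⟨i, hi, rfl⟩ | ⟨i, hi, rfl⟩ | rfl, rfl⟩
    · refine Or.inl ⟨i, hi, ?_⟩
      simp only [Finset.image_insert, Finset.image_singleton, h.toPoint_vertex₁]
      rfl
    · refine Or.inr (Or.inl ⟨i, hi, ?_⟩)
      simp only [Finset.image_insert, Finset.image_singleton, h.toPoint_vertex₂]
      rfl
    · refine Or.inr (Or.inr ?_)
      simp only [Finset.image_insert, Finset.image_singleton, QLabel.toPoint]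

lemma mem_points_iff (h : IsQLabelling n T P C₁ C₂ v w u x p) {y : β} :
    y ∈ P ↔ ∃ l, QLabel.Valid n l ∧ l.toPoint v w u x p = y := by
  rw [h.points]
  simp only [Finset.mem_union, Finset.mem_singleton, h.labelling₁.mem_ptsOf_iff,
    h.labelling₂.mem_ptsOf_iff]
  constructor
  · rintro ((⟨i, hi, rfl | rfl⟩ | ⟨i, hi, rfl | rfl⟩) | rfl)
    · exact ⟨.v i, hi, rfl⟩
    · exact ⟨.w i, hi, rfl⟩
    · exact ⟨_, QLabel.valid_vertex₂ hi.le, h.toPoint_vertex₂ i⟩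
    · exact ⟨.x i, hi, rfl⟩
    · exact ⟨.new, trivial, rfl⟩
  · rintro ⟨i | i | i | i | _, hi, rfl⟩
    · exact Or.inl (Or.inl ⟨i, hi, Or.inl rfl⟩)
    · exact Or.inl (Or.inl ⟨i, hi, Or.inr rfl⟩)
    · exact Or.inl (Or.inr ⟨i, hi.2, Or.inl rfl⟩)
    · exact Or.inl (Or.inr ⟨i, hi, Or.inr rfl⟩)
    · exact Or.inr rfl

lemma toPoint_injOn (h : IsQLabelling n T P C₁ C₂ v w u x p) :
    Set.InjOn (QLabel.toPoint v w u x p) {l | l.Valid n} := by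
  have hL := h.labelling₁
  have hM := h.labelling₂
  have hbase : ∀ i < n + 3, 0 < i → u i ≠ v 0 := fun i hi hpos e =>
    hpos.ne' (hM.v_inj i hi 0 (by omega) (e.trans h.base.symm))
  have hbase' : ∀ i < n + 3, x i ≠ v 0 := fun i hi e =>
    hM.v_ne_w 0 (by omega) i hi (h.base.trans e.symm)
  have hcross : ∀ {a b : β}, a ∈ ptsOf C₁ → b ∈ ptsOf C₂ → b ≠ v 0 → a ≠ b :=
    fun ha hb hb0 e => hb0 (h.eq_base (e ▸ ha) hb)
  have hnew₁ : ∀ {a : β}, a ∈ ptsOf C₁ → a ≠ p := fun ha e => h.notMem₁ (e ▸ ha)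
  have hnew₂ : ∀ {a : β}, a ∈ ptsOf C₂ → a ≠ p := fun ha e => h.notMem₂ (e ▸ ha)
  rintro (i | i | i | i | _) hi (j | j | j | j | _) hj e <;>
    rw [Set.mem_ofPred_eq] at hi hj <;> simp only [QLabel.Valid] at hi hj <;>
    simp only [QLabel.toPoint] at e
  · rw [hL.v_inj i hi j hj e]
  · exact absurd e (hL.v_ne_w i hi j hj)
  · exact absurd e (hcross (hL.v_mem hi) (hM.v_mem hj.2) (hbase j hj.2 hj.1))
  · exact absurd e (hcross (hL.v_mem hi) (hM.w_mem hj) (hbase' j hj))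
  · exact absurd e (hnew₁ (hL.v_mem hi))
  · exact absurd e.symm (hL.v_ne_w j hj i hi)
  · rw [hL.w_inj i hi j hj e]
  · exact absurd e (hcross (hL.w_mem hi) (hM.v_mem hj.2) (hbase j hj.2 hj.1))
  · exact absurd e (hcross (hL.w_mem hi) (hM.w_mem hj) (hbase' j hj))
  · exact absurd e (hnew₁ (hL.w_mem hi))
  · exact absurd e.symm (hcross (hL.v_mem hj) (hM.v_mem hi.2) (hbase i hi.2 hi.1))
  · exact absurd e.symm (hcross (hL.w_mem hj) (hM.v_mem hi.2) (hbase i hi.2 hi.1))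
  · rw [hM.v_inj i hi.2 j hj.2 e]
  · exact absurd e (hM.v_ne_w i hi.2 j hj)
  · exact absurd e (hnew₂ (hM.v_mem hi.2))
  · exact absurd e.symm (hcross (hL.v_mem hj) (hM.w_mem hi) (hbase' i hi))
  · exact absurd e.symm (hcross (hL.w_mem hj) (hM.w_mem hi) (hbase' i hi))
  · exact absurd e.symm (hM.v_ne_w j hj.2 i hi)
  · rw [hM.w_inj i hi j hj e]
  · exact absurd e (hnew₂ (hM.w_mem hi))
  · exact absurd e.symm (hnew₁ (hL.v_mem hj))
  · exact absurd e.symm (hnew₁ (hL.w_mem hj))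
  · exact absurd e.symm (hnew₂ (hM.v_mem hj.2))
  · exact absurd e.symm (hnew₂ (hM.w_mem hj))

end IsQLabelling

/-- Two triple systems labelled injectively by the same model are isomorphic. -/
lemma exists_iso_of_common_labelling {α γ : Type*} {L : Set α} {M : Set (Finset α)}
    (hM : ∀ s ∈ M, ∀ l ∈ s, l ∈ L) {T : Finset (Finset β)} {P : Finset β} {f : α → β}
    (hf : Set.InjOn f L) (hP : ∀ {y}, y ∈ P ↔ ∃ l, l ∈ L ∧ f l = y)
    (hT : ∀ {t}, t ∈ T ↔ ∃ s ∈ M, s.image f = t)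
    {T' : Finset (Finset γ)} {P' : Finset γ} {f' : α → γ}
    (hf' : Set.InjOn f' L) (hP' : ∀ {y}, y ∈ P' ↔ ∃ l, l ∈ L ∧ f' l = y)
    (hT' : ∀ {t}, t ∈ T' ↔ ∃ s ∈ M, s.image f' = t) (hne : L.Nonempty) :
    ∃ e : β → γ, Set.InjOn e ↑P ∧ P.image e = P' ∧
      ∀ t : Finset β, t ⊆ P → (t ∈ T ↔ t.image e ∈ T') := by
  have : Nonempty α := ⟨hne.some⟩
  let e : β → γ := fun y => f' (Function.invFunOn f L y)
  have he : ∀ l ∈ L, e (f l) = f' l := fun l hl => congrArg f' (hf.leftInvOn_invFunOn hl)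
  have heP : Set.InjOn e ↑P := by
    intro y hy y' hy' hyy'
    obtain ⟨l, hl, rfl⟩ := hP.1 hy
    obtain ⟨l', hl', rfl⟩ := hP.1 hy'
    rw [he l hl, he l' hl'] at hyy'
    rw [hf' hl hl' hyy']
  have himage : ∀ s ∈ M, (s.image f).image e = s.image f' := fun s hs => by
    rw [Finset.image_image]
    exact Finset.image_congr fun l hl => he l (hM s hs l hl)
  refine ⟨e, heP, ?_, fun t ht => ⟨?_, ?_⟩⟩
  · ext y
    simp only [Finset.mem_image, hP, hP']
    constructor
    · rintro ⟨_, ⟨l, hl, rfl⟩, rfl⟩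
      exact ⟨l, hl, (he l hl).symm⟩
    · rintro ⟨l, hl, rfl⟩
      exact ⟨f l, ⟨l, hl, rfl⟩, he l hl⟩
  · rw [hT, hT']
    rintro ⟨s, hs, rfl⟩
    exact ⟨s, hs, (himage s hs).symm⟩
  · rw [hT, hT']
    rintro ⟨s, hs, hst⟩
    have hsP : s.image f ⊆ P := by
      intro y hy
      obtain ⟨l, hl, rfl⟩ := Finset.mem_image.1 hy
      exact hP.2 ⟨l, hM s hs l hl, rfl⟩
    refine ⟨s, hs, Finset.coe_injective ?_⟩
    refine (heP.image_eq_image_iff (Finset.coe_subset.2 hsP) (Finset.coe_subset.2 ht)).1 ?_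
    rw [← Finset.coe_image, ← Finset.coe_image, himage s hs, hst]

end QUniqueness

/-- **Section 4.1 (properties of `Q(z)`).** For every `n ≥ 1`, any two partial
Steiner triple systems satisfying the defining conditions of `Q(z)` are isomorphic,
and every such PSTS has trivial automorphism group. -/
theorem stmt19 {β γ : Type*} [Fintype β] [Fintype γ] (n : ℕ) (hn : 1 ≤ n)
    (T : Finset (Finset β)) (P : Finset β) (z : β)
    (T' : Finset (Finset γ)) (P' : Finset γ) (z' : γ)
    (hQ : IsQ n T P z) (hQ' : IsQ n T' P' z') :
    (∃ e : β → γ, Set.InjOn e ↑P ∧ P.image e = P' ∧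
      ∀ t : Finset β, t ⊆ P → (t ∈ T ↔ t.image e ∈ T')) ∧
    ∀ g : Equiv.Perm β, P.image g = P →
      (∀ t : Finset β, t ∈ T ↔ t.image g ∈ T) → ∀ x ∈ P, g x = x := by
  obtain ⟨C₁, C₂, v, w, u, x, p, h⟩ := hQ.exists_labelling
  obtain ⟨D₁, D₂, v', w', u', x', p', h'⟩ := hQ'.exists_labelling
  refine ⟨?_, fun g _ hg y hy => h.apply_eq_of_isAut hg hy⟩
  exact exists_iso_of_common_labelling (L := {l | QLabel.Valid n l})
    (fun _ hs => QLabel.valid_of_mem_triples hs) h.toPoint_injOn h.mem_points_iff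
    h.mem_triples_iff h'.toPoint_injOn h'.mem_points_iff h'.mem_triples_iff ⟨.new, trivial⟩

end
end
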